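/- arXiv:2601.15843 — 6 statements merged into one kernel-verified Lean document; each statement's English description precedes it below -/
import Mathlib

section
/- Let A be a unital C*-algebra over ℂ. Then A is weakly central if and only if, for every maximal ideal M of the center Z(A) (i.e. every maximal ideal of the commutative unital C*-algebra Z(A)), the closed two-sided ideal of A generated by M is contained in exactly one maximal closed two-sided ideal of A. -/
/- Basic notions about (closed) two-sided ideals of a topological ring,
   weak centrality, and closed ideals generated by a set. -/

section Defs
variable {R : Type*}

/-- A two-sided ring ideal, as a subset of `R`. -/
def IsIdealSet [NonUnitalNonAssocRing R] (S : Set R) : Prop :=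
  (0 : R) ∈ S ∧ (∀ x ∈ S, ∀ y ∈ S, x + y ∈ S) ∧ (∀ x ∈ S, -x ∈ S) ∧
    ∀ x ∈ S, ∀ a : R, a * x ∈ S ∧ x * a ∈ S

/-- A closed two-sided ideal of a topological ring. -/
def IsClosedIdealSet [NonUnitalNonAssocRing R] [TopologicalSpace R] (S : Set R) : Prop :=
  IsIdealSet S ∧ IsClosed S

/-- A maximal (proper) closed two-sided ideal of a topological ring. -/
def IsMaxClosedIdealSet [NonUnitalNonAssocRing R] [TopologicalSpace R] (S : Set R) : Prop :=
  IsClosedIdealSet S ∧ S ≠ Set.univ ∧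
    ∀ T : Set R, IsClosedIdealSet T → S ⊆ T → T = S ∨ T = Set.univ

/-- A maximal (proper) two-sided ideal (no closedness requirement). -/
def IsMaxIdealSet [NonUnitalNonAssocRing R] (S : Set R) : Prop :=
  IsIdealSet S ∧ S ≠ Set.univ ∧
    ∀ T : Set R, IsIdealSet T → S ⊆ T → T = S ∨ T = Set.univ

/-- The center of `R`, as a set. -/
def centerSet (R : Type*) [Mul R] : Set R := {z : R | ∀ a : R, z * a = a * z}

/-- A topological ring is weakly central if no maximal closed two-sided ideal contains the
center, and the map `M ↦ M ∩ Z(R)` is injective on maximal closed two-sided ideals. -/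
def WeaklyCentral (R : Type*) [NonUnitalNonAssocRing R] [TopologicalSpace R] : Prop :=
  (∀ M : Set R, IsMaxClosedIdealSet M → ¬ centerSet R ⊆ M) ∧
    ∀ M N : Set R, IsMaxClosedIdealSet M → IsMaxClosedIdealSet N →
      M ∩ centerSet R = N ∩ centerSet R → M = N

/-- The closed two-sided ideal generated by a set `S`. -/
def closedIdealGen [NonUnitalNonAssocRing R] [TopologicalSpace R] (S : Set R) : Set R :=
  ⋂₀ {T : Set R | IsClosedIdealSet T ∧ S ⊆ T}

end Defs

/-!
Write `Z` for the center. If `N` is a maximal ideal of a complex Banach algebra `A`, then `A / N`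
is a simple Banach algebra, so its center is a field, and nonemptiness of the spectrum makes every
central element scalar modulo `N`: hence `N ∩ Z` is a maximal ideal of `Z`. Weak centrality says
that the map `N ↦ N ∩ Z` between the sets of maximal ideals is injective.

In a C⋆-algebra it is also surjective. Given a proper ideal `M` of `Z`, the elements `a` for which
`a⋆ a` is dominated by an element of `M` form a two-sided ideal of `A` containing `M`; it is proper
because a central element `h ≥ 1` is invertible in `Z`. A maximal ideal of `A` above it meets `Z`
in `M` when `M` is maximal.
-/

section Ring

variable {R : Type*} [Ring R]

lemma isIdealSet_coe (I : Ideal R) [I.IsTwoSided] : IsIdealSet (I : Set R) :=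
  ⟨I.zero_mem, fun _ hx _ hy => I.add_mem hx hy, fun _ hx => I.neg_mem hx,
    fun _ hx a => ⟨I.mul_mem_left a hx, I.mul_mem_right a hx⟩⟩

/-- An `IsIdealSet` as a bundled (left) ideal; two-sidedness is recorded by an instance. -/
def IsIdealSet.toIdeal {S : Set R} (hS : IsIdealSet S) : Ideal R where
  carrier := S
  zero_mem' := hS.1
  add_mem' hx hy := hS.2.1 _ hx _ hy
  smul_mem' a _ hx := (hS.2.2.2 _ hx a).1

instance IsIdealSet.isTwoSided_toIdeal {S : Set R} (hS : IsIdealSet S) :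
    hS.toIdeal.IsTwoSided where
  mul_mem_of_left a hx := (hS.2.2.2 _ hx a).2

lemma IsIdealSet.eq_univ_iff_one_mem {S : Set R} (hS : IsIdealSet S) :
    S = Set.univ ↔ (1 : R) ∈ S :=
  ⟨fun h => h ▸ Set.mem_univ _, fun h => Set.eq_univ_of_forall fun a => by
    simpa using (hS.2.2.2 1 h a).1⟩

lemma IsIdealSet.exists_isMaxIdealSet_superset {S : Set R} (hS : IsIdealSet S)
    (hproper : S ≠ Set.univ) : ∃ N, IsMaxIdealSet N ∧ S ⊆ N := by
  have hchain : ∀ c ⊆ {I : Ideal R | I.IsTwoSided ∧ (1 : R) ∉ I}, IsChain (· ≤ ·) c →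
      ∀ J ∈ c, ∃ ub ∈ {I : Ideal R | I.IsTwoSided ∧ (1 : R) ∉ I}, ∀ I ∈ c, I ≤ ub := by
    intro c hc hchain J hJ
    have mem_sSup {x : R} : x ∈ sSup c ↔ ∃ I ∈ c, x ∈ I :=
      Submodule.mem_sSup_of_directed ⟨J, hJ⟩ hchain.directedOn
    refine ⟨sSup c, ⟨⟨fun b hx => ?_⟩, fun h => ?_⟩, fun I hI => le_sSup hI⟩
    · obtain ⟨I, hI, hxI⟩ := mem_sSup.1 hx
      have := (hc hI).1
      exact mem_sSup.2 ⟨I, hI, I.mul_mem_right b hxI⟩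
    · obtain ⟨I, hI, h1⟩ := mem_sSup.1 h
      exact (hc hI).2 h1
  obtain ⟨N, hSN, hN⟩ := zorn_le_nonempty₀ _ hchain hS.toIdeal
    ⟨hS.isTwoSided_toIdeal, fun h => hproper (hS.eq_univ_iff_one_mem.2 h)⟩
  have := hN.prop.1
  refine ⟨N, ⟨isIdealSet_coe N, ?_, fun T hT hNT => ?_⟩, hSN⟩
  · exact fun h => hN.prop.2 ((isIdealSet_coe N).eq_univ_iff_one_mem.1 h)
  · by_cases h1 : (1 : R) ∈ T
    · exact .inr (hT.eq_univ_iff_one_mem.2 h1)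
    · exact .inl (Set.Subset.antisymm (hN.le_of_ge (y := hT.toIdeal)
        ⟨hT.isTwoSided_toIdeal, h1⟩ hNT) hNT)

lemma IsMaxIdealSet.exists_one_sub_mul_mem {N : Set R} (hN : IsMaxIdealSet N) {z : R}
    (hz : z ∈ centerSet R) (hzN : z ∉ N) : ∃ a, 1 - z * a ∈ N := by
  let I : Ideal R := Ideal.span {z} ⊔ hN.1.toIdeal
  have mem_I {x : R} : x ∈ I ↔ ∃ a, x - z * a ∈ N := by
    simp only [I, Submodule.mem_sup, Ideal.mem_span_singleton']
    constructor
    · rintro ⟨_, ⟨a, rfl⟩, n, hn, rfl⟩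
      exact ⟨a, by rwa [hz a, add_sub_cancel_left]⟩
    · rintro ⟨a, ha⟩
      exact ⟨a * z, ⟨a, rfl⟩, x - z * a, ha, by rw [hz a, add_sub_cancel]⟩
  have : I.IsTwoSided := ⟨fun b hx => by
    obtain ⟨a, ha⟩ := mem_I.1 hx
    exact mem_I.2 ⟨a * b, by simpa [sub_mul, mul_assoc] using (hN.1.2.2.2 _ ha b).2⟩⟩
  have hzI : z ∈ I := Ideal.mem_sup_left (Ideal.mem_span_singleton_self z)
  rcases hN.2.2 I (isIdealSet_coe I) (le_sup_right : hN.1.toIdeal ≤ I) with h | h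
  · exact absurd (h ▸ hzI : z ∈ N) hzN
  · exact mem_I.1 ((isIdealSet_coe I).eq_univ_iff_one_mem.1 h)

end Ring

lemma closedIdealGen_subset_iff {R : Type*} [NonUnitalNonAssocRing R] [TopologicalSpace R]
    {S N : Set R} (hN : IsClosedIdealSet N) : closedIdealGen S ⊆ N ↔ S ⊆ N :=
  ⟨(Set.subset_sInter fun _ hT => hT.2).trans, fun h => Set.sInter_subset_of_mem ⟨hN, h⟩⟩

section CentralTrace

variable (𝕜 : Type*) {A : Type*} [CommSemiring 𝕜] [Ring A] [Algebra 𝕜 A]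

lemma mem_centerSet_iff_mem_center {z : A} :
    z ∈ centerSet A ↔ z ∈ Subalgebra.center 𝕜 A := by
  simp only [centerSet, Set.mem_ofPred_eq, Subalgebra.mem_center_iff, eq_comm]

variable {N N' : Set A}

/-- The intersection `N ∩ Z(A)` of an ideal `N` of `A` with the center, as an ideal of the
center. -/
def IsIdealSet.centralTrace (hN : IsIdealSet N) : Ideal (Subalgebra.center 𝕜 A) :=
  hN.toIdeal.comap (Subalgebra.center 𝕜 A).val

variable {𝕜}

lemma IsIdealSet.mem_centralTrace (hN : IsIdealSet N) {z : Subalgebra.center 𝕜 A} :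
    z ∈ hN.centralTrace 𝕜 ↔ (z : A) ∈ N :=
  Iff.rfl

lemma IsIdealSet.centralTrace_ne_top (hN : IsIdealSet N) (hproper : N ≠ Set.univ) :
    hN.centralTrace 𝕜 ≠ ⊤ := fun h =>
  hproper (hN.eq_univ_iff_one_mem.2 ((Ideal.eq_top_iff_one _).1 h))

lemma IsIdealSet.centralTrace_eq_iff (hN : IsIdealSet N) (hN' : IsIdealSet N') :
    hN.centralTrace 𝕜 = hN'.centralTrace 𝕜 ↔ N ∩ centerSet A = N' ∩ centerSet A := by
  simp only [Ideal.ext_iff, Set.ext_iff, Set.mem_inter_iff, and_congr_left_iff,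
    mem_centerSet_iff_mem_center 𝕜, Subtype.forall, mem_centralTrace]

lemma IsIdealSet.centralTrace_eq_iff_image_subset (hN : IsIdealSet N) (hproper : N ≠ Set.univ)
    {M : Ideal (Subalgebra.center 𝕜 A)} (hM : M.IsMaximal) :
    hN.centralTrace 𝕜 = M ↔
      (fun z : Subalgebra.center 𝕜 A => (z : A)) '' (M : Set (Subalgebra.center 𝕜 A)) ⊆ N := by
  rw [Set.image_subset_iff]
  exact ⟨fun h => h.ge, fun h => (hM.eq_of_le (hN.centralTrace_ne_top hproper) h).symm⟩

lemma IsMaxClosedIdealSet.closedIdealGen_subset_iff_centralTrace_eq [TopologicalSpace A]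
    (hN : IsMaxClosedIdealSet N) {M : Ideal (Subalgebra.center 𝕜 A)} (hM : M.IsMaximal) :
    closedIdealGen ((fun z : Subalgebra.center 𝕜 A => (z : A)) ''
      (M : Set (Subalgebra.center 𝕜 A))) ⊆ N ↔ hN.1.1.centralTrace 𝕜 = M :=
  (closedIdealGen_subset_iff hN.1).trans
    (hN.1.1.centralTrace_eq_iff_image_subset hN.2.1 hM).symm

end CentralTrace

section NormedRing

variable {R : Type*} [NormedRing R]

lemma IsMaxIdealSet.isClosed [HasSummableGeomSeries R] {N : Set R} (hN : IsMaxIdealSet N) :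
    IsClosed N := by
  let I := hN.1.toIdeal
  have : I.closure.IsTwoSided := ⟨fun b hx =>
    map_mem_closure (f := (· * b)) (continuous_mul_const b) hx fun _ hy => I.mul_mem_right b hy⟩
  have hI : I ≠ ⊤ := fun h => hN.2.1 (congrArg SetLike.coe h)
  refine isClosed_of_closure_subset ?_
  rcases hN.2.2 I.closure (isIdealSet_coe _) subset_closure with h | h
  · exact h.le
  · exact absurd (SetLike.coe_injective h) (I.closure_ne_top hI)

lemma isMaxClosedIdealSet_iff_isMaxIdealSet [HasSummableGeomSeries R] {N : Set R} :
    IsMaxClosedIdealSet N ↔ IsMaxIdealSet N := by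
  refine ⟨fun hN => ⟨hN.1.1, hN.2.1, fun T hT hNT => ?_⟩,
    fun hN => ⟨⟨hN.1, hN.isClosed⟩, hN.2.1, fun T hT => hN.2.2 T hT.1⟩⟩
  by_contra! hT'
  obtain ⟨K, hK, hTK⟩ := hT.exists_isMaxIdealSet_superset hT'.2
  rcases hN.2.2 K ⟨hK.1, hK.isClosed⟩ (hNT.trans hTK) with rfl | h
  · exact hT'.1 (hTK.antisymm hNT)
  · exact hK.2.1 h

/-- The quotient norm on the quotient of a normed ring by a closed two-sided ideal. Mathlib has it
as an instance for commutative rings only; a reducible definition avoids a competing instance. -/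
noncomputable abbrev quotientNormedRing (I : Ideal R) [I.IsTwoSided] [IsClosed (I : Set R)] :
    NormedRing (R ⧸ I) where
  __ := Submodule.Quotient.normedAddCommGroup I
  __ := Ideal.Quotient.ring I
  norm_mul_le x y := by
    refine le_mul_of_forall_lt₀ fun r hr s hs => ?_
    obtain ⟨a, rfl, ha⟩ := QuotientAddGroup.norm_lt_iff.1 hr
    obtain ⟨b, rfl, hb⟩ := QuotientAddGroup.norm_lt_iff.1 hs
    calc ‖Ideal.Quotient.mk I (a * b)‖ ≤ ‖a * b‖ := Submodule.Quotient.norm_mk_le I (a * b)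
      _ ≤ ‖a‖ * ‖b‖ := norm_mul_le a b
      _ ≤ r * s := mul_le_mul ha.le hb.le (norm_nonneg b) ((norm_nonneg a).trans ha.le)

end NormedRing

section BanachAlgebra

variable {A : Type*} [NormedRing A] [NormedAlgebra ℂ A] [CompleteSpace A]

lemma exists_not_isUnit_mk_algebraMap_sub (I : Ideal A) [I.IsTwoSided] [IsClosed (I : Set A)]
    (hI : I ≠ ⊤) (a : A) : ∃ c : ℂ, ¬ IsUnit (Ideal.Quotient.mk I (algebraMap ℂ A c - a)) := by
  let := quotientNormedRing I
  let : NormedAlgebra ℂ (A ⧸ I) :=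
    { Submodule.Quotient.normedSpace I ℂ, Ideal.Quotient.algebra ℂ with }
  have : Nontrivial (A ⧸ I) := Ideal.Quotient.nontrivial_iff.2 hI
  obtain ⟨c, hc⟩ := spectrum.nonempty (Ideal.Quotient.mk I a)
  exact ⟨c, by simpa [spectrum.mem_iff] using hc⟩

lemma IsMaxIdealSet.exists_algebraMap_sub_mem {N : Set A} (hN : IsMaxIdealSet N) {z : A}
    (hz : z ∈ centerSet A) : ∃ c : ℂ, algebraMap ℂ A c - z ∈ N := by
  let I := hN.1.toIdeal
  have : IsClosed (I : Set A) := hN.isClosed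
  have hI : I ≠ ⊤ := fun h => hN.2.1 (congrArg SetLike.coe h)
  obtain ⟨c, hc⟩ := exists_not_isUnit_mk_algebraMap_sub I hI z
  refine ⟨c, by_contra fun hcN => hc ?_⟩
  have hcz : algebraMap ℂ A c - z ∈ centerSet A := fun a => by
    rw [sub_mul, mul_sub, hz a, Algebra.commutes]
  obtain ⟨b, hb⟩ := hN.exists_one_sub_mul_mem hcz hcN
  have hmul : Ideal.Quotient.mk I ((algebraMap ℂ A c - z) * b) = 1 :=
    (Ideal.Quotient.eq.2 (show 1 - (algebraMap ℂ A c - z) * b ∈ I from hb)).symm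
  refine ⟨⟨_, Ideal.Quotient.mk I b, ?_, ?_⟩, rfl⟩
  · rw [← map_mul, hmul]
  · rw [← map_mul, ← hcz b, hmul]

lemma IsMaxIdealSet.isMaximal_centralTrace {N : Set A} (hN : IsMaxIdealSet N) :
    (hN.1.centralTrace ℂ).IsMaximal := by
  refine Ideal.isMaximal_iff.2 ⟨(Ideal.ne_top_iff_one _).1 (hN.1.centralTrace_ne_top hN.2.1),
    fun J z hJ hz hzJ => ?_⟩
  obtain ⟨c, hc⟩ := hN.exists_algebraMap_sub_mem ((mem_centerSet_iff_mem_center ℂ).2 z.2)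
  have hcz : algebraMap ℂ (Subalgebra.center ℂ A) c - z ∈ J := hJ hc
  have hc0 : c ≠ 0 := by
    rintro rfl
    exact hz (by simpa [hN.1.mem_centralTrace] using (hN.1.2.2.1 _ hc))
  have hcJ : algebraMap ℂ (Subalgebra.center ℂ A) c ∈ J := by simpa using J.add_mem hcz hzJ
  simpa [← map_mul, hc0] using J.mul_mem_left (algebraMap ℂ _ c⁻¹) hcJ

end BanachAlgebra

lemma star_add_mul_add_le_two_nsmul {R : Type*} [NonUnitalRing R] [StarRing R] [PartialOrder R]
    [StarOrderedRing R] (a b : R) :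
    star (a + b) * (a + b) ≤ 2 • (star a * a + star b * b) := by
  have h : 2 • (star a * a + star b * b) - star (a + b) * (a + b) = star (a - b) * (a - b) := by
    rw [star_add, star_sub]
    noncomm_ring
  exact sub_nonneg.1 (h ▸ star_mul_self_nonneg (a - b))

section CStarAlgebra

variable {A : Type*} [CStarAlgebra A] [PartialOrder A] [StarOrderedRing A]

lemma star_mul_mul_le_norm_sq_smul_of_mem_centerSet {h : A} (hh : 0 ≤ h)
    (hcentral : h ∈ centerSet A) (c : A) : star c * h * c ≤ ‖c‖ ^ 2 • h := by
  have hc : 0 ≤ algebraMap ℝ A (‖c‖ ^ 2) - star c * c :=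
    sub_nonneg.2 CStarAlgebra.star_mul_le_algebraMap_norm_sq
  have hprod := Commute.mul_nonneg hc hh (hcentral _).symm
  rwa [sub_mul, ← Algebra.smul_def, mul_assoc, ← hcentral c, ← mul_assoc, sub_nonneg] at hprod

lemma isUnit_center_of_one_le {h : Subalgebra.center ℂ A} (hh : 1 ≤ (h : A)) : IsUnit h := by
  obtain ⟨u, hu⟩ := CStarAlgebra.isUnit_of_le 1 hh
  have huc : (↑u⁻¹ : A) ∈ Subalgebra.center ℂ A :=
    Set.units_inv_mem_center (hu ▸ h.2)
  exact IsUnit.of_mul_eq_one ⟨_, huc⟩ (Subtype.ext (by simp [← hu]))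

/-- The two-sided ideal of all `a` such that `a⋆ a` is dominated by an element of the ideal `M` of
the center. It stands in for the ideal of `A` generated by `M`, since its properness is visible
from the order. -/
def centrallyDominatedIdeal (M : Ideal (Subalgebra.center ℂ A)) : Ideal A where
  carrier := {a | ∃ h ∈ M, star a * a ≤ h}
  zero_mem' := ⟨0, M.zero_mem, by simp⟩
  add_mem' := by
    rintro a b ⟨h, hh, ha⟩ ⟨k, hk, hb⟩
    refine ⟨2 • (h + k), M.smul_of_tower_mem _ (M.add_mem hh hk), ?_⟩
    exact (star_add_mul_add_le_two_nsmul a b).trans (nsmul_le_nsmul_right (add_le_add ha hb) 2)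
  smul_mem' := by
    rintro c a ⟨h, hh, ha⟩
    refine ⟨‖star c * c‖ • h, M.smul_of_tower_mem _ hh, ?_⟩
    calc star (c * a) * (c * a) = star a * (star c * c) * a := by simp only [star_mul, mul_assoc]
      _ ≤ ‖star c * c‖ • (star a * a) := CStarAlgebra.star_left_conjugate_le_norm_smul
      _ ≤ ‖star c * c‖ • (h : A) := smul_le_smul_of_nonneg_left ha (norm_nonneg _)

variable (M : Ideal (Subalgebra.center ℂ A))

instance isTwoSided_centrallyDominatedIdeal : (centrallyDominatedIdeal M).IsTwoSided where
  mul_mem_of_left := by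
    rintro a c ⟨h, hh, ha⟩
    refine ⟨‖c‖ ^ 2 • h, M.smul_of_tower_mem _ hh, ?_⟩
    calc star (a * c) * (a * c) = star c * (star a * a) * c := by simp only [star_mul, mul_assoc]
      _ ≤ star c * h * c := star_left_conjugate_le_conjugate ha c
      _ ≤ ‖c‖ ^ 2 • (h : A) := star_mul_mul_le_norm_sq_smul_of_mem_centerSet
          ((star_mul_self_nonneg a).trans ha) ((mem_centerSet_iff_mem_center ℂ).2 h.2) c

lemma coe_mem_centrallyDominatedIdeal {z : Subalgebra.center ℂ A} (hz : z ∈ M) :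
    (z : A) ∈ centrallyDominatedIdeal M :=
  ⟨⟨star (z : A), Set.star_mem_center z.2⟩ * z, M.mul_mem_left _ hz, le_rfl⟩

lemma centrallyDominatedIdeal_ne_top (hM : M ≠ ⊤) : centrallyDominatedIdeal M ≠ ⊤ := by
  rw [Ideal.ne_top_iff_one]
  rintro ⟨h, hh, h1⟩
  exact hM (M.eq_top_of_isUnit_mem hh (isUnit_center_of_one_le (by simpa using h1)))

end CStarAlgebra

lemma exists_isMaxIdealSet_centralTrace_eq {A : Type*} [CStarAlgebra A]
    {M : Ideal (Subalgebra.center ℂ A)} (hM : M.IsMaximal) :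
    ∃ (N : Set A) (hN : IsMaxIdealSet N), hN.1.centralTrace ℂ = M := by
  let := CStarAlgebra.spectralOrder A
  have := CStarAlgebra.spectralOrderedRing A
  obtain ⟨N, hN, hle⟩ :=
    (isIdealSet_coe (centrallyDominatedIdeal M)).exists_isMaxIdealSet_superset fun h =>
      centrallyDominatedIdeal_ne_top M hM.ne_top (SetLike.coe_injective h)
  refine ⟨N, hN, (hN.1.centralTrace_eq_iff_image_subset hN.2.1 hM).2 ?_⟩
  rintro _ ⟨z, hz, rfl⟩
  exact hle (coe_mem_centrallyDominatedIdeal M hz)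

/-- **Characterization of weak centrality via maximal ideals of the center.**
A unital C*-algebra `A` is weakly central iff for every maximal ideal `M` of its center
`Z(A)`, the closed two-sided ideal of `A` generated by `M` is contained in exactly one
maximal closed two-sided ideal of `A`. -/
theorem weaklyCentral_iff_ideal_of_central_maximal_in_unique_maximal
    {A : Type*} [NormedRing A] [StarRing A] [CStarRing A]
    [NormedAlgebra ℂ A] [StarModule ℂ A] [CompleteSpace A] :
    WeaklyCentral A ↔
      ∀ M : Ideal (Subalgebra.center ℂ A), M.IsMaximal →
        ∃! N : Set A, IsMaxClosedIdealSet N ∧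
          closedIdealGen ((fun z : Subalgebra.center ℂ A => (z : A)) ''
            (M : Set (Subalgebra.center ℂ A))) ⊆ N := by
  let : CStarAlgebra A := {}
  constructor
  · intro hA M hM
    obtain ⟨N, hNmax, hNM⟩ := exists_isMaxIdealSet_centralTrace_eq hM
    have hN := isMaxClosedIdealSet_iff_isMaxIdealSet.2 hNmax
    refine ⟨N, ⟨hN, (hN.closedIdealGen_subset_iff_centralTrace_eq hM).2 hNM⟩, ?_⟩
    rintro N' ⟨hN', hMN'⟩
    have hN'M := (hN'.closedIdealGen_subset_iff_centralTrace_eq hM).1 hMN'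
    exact hA.2 N' N hN' hN ((hN'.1.1.centralTrace_eq_iff hN.1.1).1 (hN'M.trans hNM.symm))
  · intro hunique
    refine ⟨fun N hN hcenter => ?_, fun N N' hN hN' hNN' => ?_⟩
    · exact hN.2.1 (hN.1.1.eq_univ_iff_one_mem.2 (hcenter fun a => by simp))
    · have hM := (isMaxClosedIdealSet_iff_isMaxIdealSet.1 hN).isMaximal_centralTrace
      have htrace := (hN'.1.1.centralTrace_eq_iff (𝕜 := ℂ) hN.1.1).2 hNN'.symm
      exact (hunique _ hM).unique
        ⟨hN, (hN.closedIdealGen_subset_iff_centralTrace_eq hM).2 rfl⟩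
        ⟨hN', (hN'.closedIdealGen_subset_iff_centralTrace_eq hM).2 htrace⟩
end

section
/- Let X be a compact Hausdorff space and let A be a unital C(X)-algebra whose structure map Φ : C(X,ℂ) → Z(A) satisfies Φ(C(X,ℂ)) = Z(A). If A is weakly central, then for every x ∈ X with I_x ≠ A the center of the fiber A(x) = A/I_x is one-dimensional, i.e. equals ℂ·1. -/
/-!
Weak centrality leaves at most one maximal ideal above `I_x`, so the fiber `A(x)` has at most one
maximal two-sided ideal. A central non-unit always lies in such an ideal, hence the center `Z` of a
nonzero fiber is a local ring. For a self-adjoint `a` that is central modulo `I_x`, functional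
calculus gives a homomorphism `C(σ(a), ℝ) → Z` with closed kernel. The kernel consists of the
functions vanishing on some closed set `K`, and `K` is a single point `s`: if it had two points, a
bump function `h` separating them would make neither `h` nor `1 - h` invertible in the local ring
`Z`. As the identity minus `s` is killed, `a` is congruent to `s` modulo `I_x`. Real and imaginary
parts reduce the general case to the self-adjoint one.
-/

section MaximalIdeals

instance isCoatomic_twoSidedIdeal {R : Type*} [Ring R] : IsCoatomic (TwoSidedIdeal R) := by
  refine .of_isChain_bounded fun c hc ⟨I, hI⟩ htop ↦ ?_
  let U : TwoSidedIdeal R := .mk' {x | ∃ J ∈ c, x ∈ J}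
    ⟨I, hI, I.zero_mem⟩
    (by
      rintro x y ⟨J, hJ, hx⟩ ⟨K, hK, hy⟩
      obtain hJK | hKJ := hc.total hJ hK
      · exact ⟨K, hK, K.add_mem (hJK hx) hy⟩
      · exact ⟨J, hJ, J.add_mem hx (hKJ hy)⟩)
    (fun ⟨J, hJ, hx⟩ ↦ ⟨J, hJ, J.neg_mem hx⟩)
    (fun ⟨J, hJ, hx⟩ ↦ ⟨J, hJ, J.mul_mem_left _ _ hx⟩)
    (fun ⟨J, hJ, hx⟩ ↦ ⟨J, hJ, J.mul_mem_right _ _ hx⟩)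
  have mem_U {x : R} : x ∈ U ↔ ∃ J ∈ c, x ∈ J := TwoSidedIdeal.mem_mk' ..
  refine ⟨U, fun hU ↦ ?_, fun J hJ x hx ↦ mem_U.2 ⟨J, hJ, hx⟩⟩
  obtain ⟨J, hJ, one_mem⟩ := mem_U.1 (U.one_mem_iff.2 hU)
  exact htop (J.one_mem_iff.1 one_mem ▸ hJ)

theorem isCoatom_comap_of_surjective {R S : Type*} [Ring R] [Ring S] {f : R →+* S}
    (hf : Function.Surjective f) {M : TwoSidedIdeal S} (hM : IsCoatom M) :
    IsCoatom (M.comap f) := by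
  have : RingHomSurjective f := ⟨hf⟩
  refine ⟨fun htop ↦ hM.1 (M.one_mem_iff.1 ?_), fun J hJ ↦ J.one_mem_iff.1 ?_⟩
  · simpa [TwoSidedIdeal.mem_comap] using ((M.comap f).one_mem_iff.2 htop)
  · obtain ⟨hMJ, y, hyJ, hyM⟩ := SetLike.lt_iff_le_and_exists.1 hJ
    let K : TwoSidedIdeal S := (J.asIdeal.map f).toTwoSided
    have mem_K {z : S} : z ∈ K ↔ ∃ x ∈ J, f x = z := by
      simp [K, Ideal.mem_map_iff_of_surjective f hf]
    have hMK : M < K := by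
      refine SetLike.lt_iff_le_and_exists.2 ⟨fun z hz ↦ ?_, f y, mem_K.2 ⟨y, hyJ, rfl⟩, ?_⟩
      · obtain ⟨x, rfl⟩ := hf z
        exact mem_K.2 ⟨x, hMJ (TwoSidedIdeal.mem_comap f |>.2 hz), rfl⟩
      · rwa [← TwoSidedIdeal.mem_comap f]
    obtain ⟨x, hxJ, hx⟩ := mem_K.1 (K.one_mem_iff.2 (hM.2 K hMK))
    have : 1 - x ∈ M.comap f := by simp [TwoSidedIdeal.mem_comap, hx, M.zero_mem]
    simpa using J.add_mem (hMJ this) hxJ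

theorem exists_isCoatom_mem_of_not_isUnit {R : Type*} [Ring R] {z : Subring.center R}
    (hz : ¬IsUnit z) : ∃ M : TwoSidedIdeal R, IsCoatom M ∧ (z : R) ∈ M := by
  have commute_z (a : R) : a * z = z * a := Subring.mem_center_iff.1 z.2 a
  have : (Ideal.span {(z : R)}).IsTwoSided := ⟨fun {x} b hx ↦ by
    obtain ⟨a, rfl⟩ := Ideal.mem_span_singleton'.1 hx
    exact Ideal.mem_span_singleton'.2 ⟨a * b, by rw [mul_assoc, mul_assoc, commute_z]⟩⟩
  let I : TwoSidedIdeal R := (Ideal.span {(z : R)}).toTwoSided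
  obtain hI | ⟨M, hM, hIM⟩ := eq_top_or_exists_le_coatom I
  · obtain ⟨a, ha⟩ : ∃ a, a * (z : R) = 1 := by
      simpa [I, Ideal.mem_span_singleton'] using I.one_mem_iff.2 hI
    let u : Rˣ := ⟨z, a, by rw [← commute_z, ha], ha⟩
    have a_mem : a ∈ Subring.center R := Set.units_inv_mem_center (a := u) z.2
    exact absurd (IsUnit.of_mul_eq_one_right (⟨a, a_mem⟩ : Subring.center R) (Subtype.ext ha)) hz
  · exact ⟨M, hM, hIM (by simp [I])⟩

theorem isLocalRing_center {R : Type*} [Ring R] [Nontrivial R]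
    (hR : ∀ M N : TwoSidedIdeal R, IsCoatom M → IsCoatom N → M = N) :
    IsLocalRing (Subring.center R) := by
  refine .of_isUnit_or_isUnit_one_sub_self fun z ↦ ?_
  by_contra! h
  obtain ⟨M, hM, hzM⟩ := exists_isCoatom_mem_of_not_isUnit h.1
  obtain ⟨N, hN, hzN⟩ := exists_isCoatom_mem_of_not_isUnit h.2
  obtain rfl := hR M N hM hN
  exact hM.1 (M.one_mem_iff.1 (by simpa using M.add_mem hzM hzN))

end MaximalIdeals

section ContinuousFunctions

theorem exists_continuousMap_mul_eq_zero {X : Type*} [TopologicalSpace X] {f : C(X, ℝ)} {s t : X}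
    (hs : f s = 0) (ht : f t ≠ 0) :
    ∃ p q h : C(X, ℝ), h * p = 0 ∧ (1 - h) * q = 0 ∧ p s ≠ 0 ∧ q t ≠ 0 := by
  -- `h` is `g` clamped to `[0, 1]`, so `h = 0` where `p ≠ 0` and `h = 1` where `q ≠ 0`.
  let g : C(X, ℝ) := ⟨fun r ↦ 3 * (f r / f t) - 1, by fun_prop⟩
  have hgs : g s = -1 := by simp [g, hs]
  have hgt : g t = 2 := by norm_num [g, ht]
  refine ⟨-g ⊔ 0, (g - 1) ⊔ 0, (g ⊓ 1) ⊔ 0, ?_, ?_, by simp [hgs], by norm_num [hgt]⟩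
  · ext r
    obtain hr | hr := le_total (g r) 0 <;> simp [hr]
  · ext r
    obtain hr | hr := le_total (g r) 1 <;> simp [hr]

theorem exists_forall_eval_eq_zero_imp_map_eq_zero {X Z : Type*} [TopologicalSpace X]
    [CompactSpace X] [T2Space X] [CommRing Z] [IsLocalRing Z] {ψ : C(X, ℝ) →+* Z}
    (hψ : IsClosed (RingHom.ker ψ : Set C(X, ℝ))) :
    ∃ s, ∀ f : C(X, ℝ), f s = 0 → ψ f = 0 := by
  have exists_eval_ne_zero {f : C(X, ℝ)} (hf : ψ f ≠ 0) :
      ∃ t, f t ≠ 0 ∧ ∀ g, ψ g = 0 → g t = 0 := by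
    rw [ne_eq, ← RingHom.mem_ker, ← ContinuousMap.idealOfSet_ofIdeal_isClosed hψ,
      ContinuousMap.notMem_idealOfSet] at hf
    obtain ⟨t, ht, hft⟩ := hf
    exact ⟨t, hft, fun g hg ↦ ContinuousMap.notMem_setOfIdeal.1 ht hg⟩
  obtain ⟨s, -, hs⟩ := exists_eval_ne_zero (f := 1) (by simp)
  refine ⟨s, fun f hfs ↦ by_contra fun hf ↦ ?_⟩
  obtain ⟨t, hft, ht⟩ := exists_eval_ne_zero hf
  obtain ⟨p, q, h, hp, hq, hps, hqt⟩ := exists_continuousMap_mul_eq_zero hfs hft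
  obtain hu | hu := IsLocalRing.isUnit_or_isUnit_one_sub_self (ψ h)
  · exact hps (hs p (hu.mul_right_eq_zero.1 (by rw [← map_mul, hp, map_zero])))
  · exact hqt (ht q (hu.mul_right_eq_zero.1 (by
      rw [← map_one ψ, ← map_sub, ← map_mul, hq, map_zero])))

end ContinuousFunctions

section FunctionalCalculus

variable {A Q : Type*} [Ring A] [TopologicalSpace A] [IsTopologicalRing A] [Ring Q] {π : A →+* Q}

theorem isClosed_preimage_center (hπ : Function.Surjective π)
    (hker : IsClosed (RingHom.ker π : Set A)) : IsClosed {a | π a ∈ Subring.center Q} := by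
  have : {a | π a ∈ Subring.center Q} = ⋂ b, {a | b * a - a * b ∈ RingHom.ker π} := by
    ext a
    simp [Subring.mem_center_iff, hπ.forall, sub_eq_zero, RingHom.mem_ker]
  rw [this]
  exact isClosed_iInter fun b ↦ hker.preimage (by fun_prop)

variable [StarRing A] [Algebra ℝ A] [ContinuousFunctionalCalculus ℝ A IsSelfAdjoint]

theorem map_cfcHom_mem_center (hπ : Function.Surjective π)
    (hker : IsClosed (RingHom.ker π : Set A)) {a : A} (ha : IsSelfAdjoint a)
    (hπa : π a ∈ Subring.center Q) (f : C(spectrum ℝ a, ℝ)) :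
    π (cfcHom (R := ℝ) ha f) ∈ Subring.center Q := by
  have := ContinuousFunctionalCalculus.compactSpace_spectrum (R := ℝ) (p := IsSelfAdjoint) a
  have hid : π (cfcHom (R := ℝ) ha (.restrict (spectrum ℝ a) (.id ℝ))) ∈ Subring.center Q := by
    rwa [cfcHom_id]
  induction f using ContinuousMap.induction_on_of_compact with
  | const r =>
    have hconst : cfcHom ha (.const _ r) = algebraMap ℝ A r := AlgHomClass.commutes (cfcHom ha) r
    rw [hconst, Subring.mem_center_iff, hπ.forall]
    intro b
    rw [← map_mul, ← map_mul, Algebra.commutes]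
  | id => exact hid
  | star_id => simpa using hid
  | add f g hf hg => simpa only [map_add] using add_mem hf hg
  | mul f g hf hg => simpa only [map_mul] using mul_mem hf hg
  | frequently f hf =>
    have hclosed := (isClosed_preimage_center hπ hker).preimage
      (cfcHom_continuous (R := ℝ) ha)
    exact isClosed_iff_frequently.1 hclosed f hf

theorem exists_map_eq_map_algebraMap_of_isSelfAdjoint [IsLocalRing (Subring.center Q)]
    (hπ : Function.Surjective π) (hker : IsClosed (RingHom.ker π : Set A)) {a : A}
    (ha : IsSelfAdjoint a) (hπa : π a ∈ Subring.center Q) :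
    ∃ c : ℝ, π a = π (algebraMap ℝ A c) := by
  have := ContinuousFunctionalCalculus.compactSpace_spectrum (R := ℝ) (p := IsSelfAdjoint) a
  let φ : C(spectrum ℝ a, ℝ) →⋆ₐ[ℝ] A := cfcHom ha
  let ψ : C(spectrum ℝ a, ℝ) →+* Subring.center Q :=
    (π.comp (φ : C(spectrum ℝ a, ℝ) →+* A)).codRestrict _ (map_cfcHom_mem_center hπ hker ha hπa)
  have ψ_eq_zero {f : C(spectrum ℝ a, ℝ)} : ψ f = 0 ↔ π (φ f) = 0 := Subtype.ext_iff
  have ker_ψ : IsClosed (RingHom.ker ψ : Set C(spectrum ℝ a, ℝ)) := by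
    have ker_eq : (RingHom.ker ψ : Set C(spectrum ℝ a, ℝ)) = φ ⁻¹' RingHom.ker π :=
      Set.ext fun _ ↦ ψ_eq_zero
    exact ker_eq ▸ hker.preimage (cfcHom_continuous (R := ℝ) ha)
  obtain ⟨s, hs⟩ := exists_forall_eval_eq_zero_imp_map_eq_zero ker_ψ
  have hφ : φ (.restrict (spectrum ℝ a) (.id ℝ) - algebraMap ℝ _ s) = a - algebraMap ℝ A s := by
    rw [map_sub, AlgHomClass.commutes, cfcHom_id]
  exact ⟨s, sub_eq_zero.1 (by rw [← map_sub, ← hφ, ← ψ_eq_zero]; exact hs _ (by simp))⟩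

end FunctionalCalculus

theorem isCentral_of_surjective {A Q : Type*} [Ring A] [TopologicalSpace A] [IsTopologicalRing A]
    [StarRing A] [Algebra ℂ A] [StarModule ℂ A] [ContinuousFunctionalCalculus ℝ A IsSelfAdjoint]
    [Ring Q] [Algebra ℂ Q] {π : A →ₐ[ℂ] Q} (hπ : Function.Surjective π)
    (hker : IsClosed (RingHom.ker π : Set A)) (hstar : ∀ a, π a = 0 → π (star a) = 0)
    (hQ : ∀ M N : TwoSidedIdeal Q, IsCoatom M → IsCoatom N → M = N) :
    Algebra.IsCentral ℂ Q := by
  refine ⟨fun q hq ↦ ?_⟩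
  obtain _ | _ := subsingleton_or_nontrivial Q
  · exact Subsingleton.elim 0 q ▸ zero_mem _
  have := isLocalRing_center hQ
  have mem_bot_of_isSelfAdjoint {b : A} (hb : IsSelfAdjoint b)
      (hπb : π b ∈ Subalgebra.center ℂ Q) : π b ∈ (⊥ : Subalgebra ℂ Q) := by
    obtain ⟨c, hc⟩ := exists_map_eq_map_algebraMap_of_isSelfAdjoint
      (π := (π : A →+* Q)) hπ hker hb hπb
    exact Algebra.mem_bot.2 ⟨c, (π.commutes (c : ℂ)).symm.trans hc.symm⟩
  obtain ⟨a, rfl⟩ := hπ q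
  have hsa : π (star a) ∈ Subalgebra.center ℂ Q := by
    rw [Subalgebra.mem_center_iff, hπ.forall] at hq ⊢
    intro b
    have := hstar (a * star b - star b * a) (by simp [hq])
    simpa [sub_eq_zero] using this
  have hre : π (realPart a : A) ∈ Subalgebra.center ℂ Q := by
    rw [realPart_apply_coe, ← Complex.coe_smul, map_smul, map_add]
    exact Subalgebra.smul_mem _ (add_mem hq hsa) _
  have him : π (imaginaryPart a : A) ∈ Subalgebra.center ℂ Q := by
    rw [imaginaryPart_apply_coe, ← Complex.coe_smul, map_smul, map_smul, map_sub]
    exact Subalgebra.smul_mem _ (Subalgebra.smul_mem _ (sub_mem hq hsa) _) _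
  rw [← realPart_add_I_smul_imaginaryPart a, map_add, map_smul]
  exact add_mem (mem_bot_of_isSelfAdjoint (realPart a).2 hre)
    (Subalgebra.smul_mem _ (mem_bot_of_isSelfAdjoint (imaginaryPart a).2 him) _)

section IdealSets

variable {R : Type*}

theorem isIdealSet_iff_exists_coe_eq [NonUnitalNonAssocRing R] {S : Set R} :
    IsIdealSet S ↔ ∃ I : TwoSidedIdeal R, (I : Set R) = S := by
  constructor
  · intro hS
    exact ⟨.mk' S hS.1 (fun hx hy ↦ hS.2.1 _ hx _ hy) (fun hx ↦ hS.2.2.1 _ hx)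
      (fun hy ↦ (hS.2.2.2 _ hy _).1) (fun hx ↦ (hS.2.2.2 _ hx _).2), TwoSidedIdeal.coe_mk' ..⟩
  · rintro ⟨I, rfl⟩
    exact ⟨I.zero_mem, fun _ hx _ hy ↦ I.add_mem hx hy, fun _ hx ↦ I.neg_mem hx,
      fun _ hx a ↦ ⟨I.mul_mem_left a _ hx, I.mul_mem_right _ a hx⟩⟩

theorem isClosed_of_isCoatom [NormedRing R] [HasSummableGeomSeries R] {M : TwoSidedIdeal R}
    (hM : IsCoatom M) : IsClosed (M : Set R) := by
  have : M.asIdeal.closure.IsTwoSided := ⟨fun {_} b hx ↦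
    map_mem_closure (f := (· * b)) (continuous_mul_const b) hx fun _ hy ↦ M.mul_mem_right _ b hy⟩
  have hle : M ≤ M.asIdeal.closure.toTwoSided := fun _ hx ↦
    Ideal.mem_toTwoSided.2 (subset_closure hx)
  have hne : M.asIdeal.closure.toTwoSided ≠ ⊤ := fun h ↦ by
    refine M.asIdeal.closure_ne_top (fun htop ↦ hM.1 ?_) ?_
    · rwa [← M.one_mem_iff, ← TwoSidedIdeal.mem_asIdeal, ← Ideal.eq_top_iff_one]
    · rw [← Ideal.asIdeal_toTwoSided M.asIdeal.closure, h, TwoSidedIdeal.top_asIdeal]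
  rw [← (hM.le_iff.1 hle).resolve_left hne, Ideal.coe_toTwoSided]
  exact isClosed_closure

theorem isMaxClosedIdealSet_of_isCoatom [NormedRing R] [HasSummableGeomSeries R]
    {M : TwoSidedIdeal R} (hM : IsCoatom M) : IsMaxClosedIdealSet (M : Set R) := by
  refine ⟨⟨isIdealSet_iff_exists_coe_eq.2 ⟨M, rfl⟩, isClosed_of_isCoatom hM⟩, ?_,
    fun T hT hMT ↦ ?_⟩
  · rw [← TwoSidedIdeal.coe_top R]
    exact SetLike.coe_injective.ne hM.1
  · obtain ⟨J, rfl⟩ := isIdealSet_iff_exists_coe_eq.1 hT.1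
    obtain rfl | rfl := hM.le_iff.1 hMT
    · exact Or.inr (TwoSidedIdeal.coe_top R)
    · exact Or.inl rfl

variable [NonUnitalNonAssocRing R] [TopologicalSpace R]

theorem subset_closedIdealGen (S : Set R) : S ⊆ closedIdealGen S :=
  Set.subset_sInter fun _ hT ↦ hT.2

theorem isClosedIdealSet_closedIdealGen (S : Set R) : IsClosedIdealSet (closedIdealGen S) :=
  ⟨⟨fun _ hT ↦ hT.1.1.1, fun _ hx _ hy T hT ↦ hT.1.1.2.1 _ (hx T hT) _ (hy T hT),
    fun _ hx T hT ↦ hT.1.1.2.2.1 _ (hx T hT), fun _ hx a ↦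
      ⟨fun T hT ↦ (hT.1.1.2.2.2 _ (hx T hT) a).1, fun T hT ↦ (hT.1.1.2.2.2 _ (hx T hT) a).2⟩⟩,
    isClosed_sInter fun _ hT ↦ hT.1.2⟩

theorem IsClosedIdealSet.preimage_star [StarRing R] [ContinuousStar R] {S : Set R}
    (hS : IsClosedIdealSet S) : IsClosedIdealSet (star ⁻¹' S) := by
  obtain ⟨⟨zero_mem, add_mem, neg_mem, mul_mem⟩, hclosed⟩ := hS
  refine ⟨⟨?_, fun x hx y hy ↦ ?_, fun x hx ↦ ?_, fun x hx a ↦ ?_⟩,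
    hclosed.preimage continuous_star⟩
  · simpa only [Set.mem_preimage, star_zero] using zero_mem
  · simpa only [Set.mem_preimage, star_add] using add_mem _ hx _ hy
  · simpa only [Set.mem_preimage, star_neg] using neg_mem _ hx
  · simpa only [Set.mem_preimage, star_mul] using (mul_mem _ hx (star a)).symm

theorem star_mem_closedIdealGen [StarRing R] [ContinuousStar R] {S : Set R}
    (hS : ∀ x ∈ S, star x ∈ S) {x : R} (hx : x ∈ closedIdealGen S) :
    star x ∈ closedIdealGen S :=
  hx _ ⟨(isClosedIdealSet_closedIdealGen S).preimage_star,
    fun y hy ↦ subset_closedIdealGen S (hS y hy)⟩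

end IdealSets

section Characters

variable {k C R : Type*} [Field k] [Ring C] [Algebra k C] [Ring R] [Algebra k R]

theorem map_mem_iff_of_image_ker_subset (Φ : C →ₐ[k] R) (χ : C →ₐ[k] k) {M : TwoSidedIdeal R}
    (hM : M ≠ ⊤) (hχ : Φ '' {f | χ f = 0} ⊆ M) {f : C} : Φ f ∈ M ↔ χ f = 0 := by
  refine ⟨fun hf ↦ by_contra fun hne ↦ hM (M.one_mem_iff.1 ?_), fun hf ↦ hχ ⟨f, hf, rfl⟩⟩
  have hsub : Φ (f - algebraMap k C (χ f)) ∈ M := hχ ⟨_, by simp, rfl⟩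
  have hscalar : algebraMap k R (χ f) ∈ M := by simpa using M.sub_mem hf hsub
  simpa [← map_mul, hne] using M.mul_mem_left (algebraMap k R (χ f)⁻¹) _ hscalar

theorem WeaklyCentral.eq_of_image_ker_subset [TopologicalSpace R] (hR : WeaklyCentral R)
    {Φ : C →ₐ[k] R} (hΦ : centerSet R ⊆ Set.range Φ) {χ : C →ₐ[k] k} {M N : TwoSidedIdeal R}
    (hM : IsMaxClosedIdealSet (M : Set R)) (hN : IsMaxClosedIdealSet (N : Set R))
    (hχM : Φ '' {f | χ f = 0} ⊆ M) (hχN : Φ '' {f | χ f = 0} ⊆ N) : M = N := by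
  have ne_top {J : TwoSidedIdeal R} (hJ : IsMaxClosedIdealSet (J : Set R)) : J ≠ ⊤ := by
    rintro rfl
    exact hJ.2.1 (TwoSidedIdeal.coe_top R)
  refine SetLike.coe_injective (hR.2 M N hM hN (Set.ext fun z ↦ and_congr_left fun hz ↦ ?_))
  obtain ⟨f, rfl⟩ := hΦ hz
  exact (map_mem_iff_of_image_ker_subset Φ χ (ne_top hM) hχM).trans
    (map_mem_iff_of_image_ker_subset Φ χ (ne_top hN) hχN).symm

theorem WeaklyCentral.eq_of_isCoatom_of_surjective {R S : Type*} [NormedRing R]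
    [HasSummableGeomSeries R] [Algebra k R] [Ring S] (hR : WeaklyCentral R) {Φ : C →ₐ[k] R}
    (hΦ : centerSet R ⊆ Set.range Φ) {χ : C →ₐ[k] k} {f : R →+* S} (hf : Function.Surjective f)
    (hχ : ∀ c, χ c = 0 → f (Φ c) = 0) {M N : TwoSidedIdeal S} (hM : IsCoatom M)
    (hN : IsCoatom N) : M = N := by
  have image_ker_subset (J : TwoSidedIdeal S) : Φ '' {c | χ c = 0} ⊆ J.comap f := by
    rintro _ ⟨c, hc, rfl⟩
    rw [SetLike.mem_coe, TwoSidedIdeal.mem_comap, hχ c hc]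
    exact J.zero_mem
  have hcomap : M.comap f = N.comap f := hR.eq_of_image_ker_subset hΦ
    (isMaxClosedIdealSet_of_isCoatom (isCoatom_comap_of_surjective hf hM))
    (isMaxClosedIdealSet_of_isCoatom (isCoatom_comap_of_surjective hf hN))
    (image_ker_subset M) (image_ker_subset N)
  refine SetLike.ext (hf.forall.2 fun x ↦ ?_)
  rw [← TwoSidedIdeal.mem_comap f, hcomap, TwoSidedIdeal.mem_comap]

end Characters

theorem forall_commutator_mem_iff_of_isCentral_quotient {k R : Type*} [CommSemiring k] [Ring R]
    [Algebra k R] (I : TwoSidedIdeal R) [Algebra.IsCentral k (R ⧸ I.asIdeal)] (a : R) :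
    (∀ b, a * b - b * a ∈ I) ↔ ∃ c : k, a - c • (1 : R) ∈ I := by
  have mk_eq_mk {x y : R} :
      Ideal.Quotient.mk I.asIdeal x = Ideal.Quotient.mk I.asIdeal y ↔ x - y ∈ I :=
    Ideal.Quotient.eq.trans TwoSidedIdeal.mem_asIdeal
  calc (∀ b, a * b - b * a ∈ I)
      ↔ Ideal.Quotient.mk I.asIdeal a ∈ Subalgebra.center k (R ⧸ I.asIdeal) := by
        simp only [Subalgebra.mem_center_iff, Ideal.Quotient.mk_surjective.forall, ← map_mul,
          ← mk_eq_mk, eq_comm]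
    _ ↔ ∃ c : k, a - c • (1 : R) ∈ I := by
        rw [Algebra.IsCentral.center_eq_bot, Algebra.mem_bot, Set.mem_range]
        simp only [← mk_eq_mk, Algebra.algebraMap_eq_smul_one]
        exact exists_congr fun c ↦ eq_comm

theorem weaklyCentral_fiber_center_one_dimensional_general {C A : Type*} [Ring C] [Algebra ℂ C]
    [Star C] [CStarAlgebra A] (Φ : C →⋆ₐ[ℂ] A) (hΦ : centerSet A ⊆ Set.range Φ)
    (hwc : WeaklyCentral A) (χ : C →⋆ₐ[ℂ] ℂ) (a : A) :
    (∀ b : A, a * b - b * a ∈ closedIdealGen (Φ '' {f | χ f = 0})) ↔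
      ∃ c : ℂ, a - c • (1 : A) ∈ closedIdealGen (Φ '' {f | χ f = 0}) := by
  have hclosed := isClosedIdealSet_closedIdealGen (Φ '' {f | χ f = 0})
  obtain ⟨I, hI⟩ := isIdealSet_iff_exists_coe_eq.1 hclosed.1
  have hker : (RingHom.ker (Ideal.Quotient.mk I.asIdeal) : Set A) = I := by
    rw [Ideal.mk_ker, TwoSidedIdeal.coe_asIdeal]
  have mk_eq_zero {x : A} : Ideal.Quotient.mk I.asIdeal x = 0 ↔ x ∈ I := Set.ext_iff.1 hker x
  have image_ker_subset : Φ '' {f | χ f = 0} ⊆ I := hI ▸ subset_closedIdealGen _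
  have star_mem {x : A} (hx : x ∈ I) : star x ∈ I := by
    rw [← SetLike.mem_coe, hI] at hx ⊢
    refine star_mem_closedIdealGen ?_ hx
    rintro _ ⟨f, hf, rfl⟩
    exact ⟨star f, by simpa [map_star] using! hf, map_star Φ f⟩
  have := isCentral_of_surjective (π := Ideal.Quotient.mkₐ ℂ I.asIdeal)
    Ideal.Quotient.mk_surjective (hker.symm ▸ hI ▸ hclosed.2)
    (fun x hx ↦ mk_eq_zero.2 (star_mem (mk_eq_zero.1 hx)))
    (fun M N ↦ hwc.eq_of_isCoatom_of_surjective (Φ := Φ.toAlgHom) hΦ (χ := χ.toAlgHom)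
      Ideal.Quotient.mk_surjective fun f hf ↦ mk_eq_zero.2 (image_ker_subset ⟨f, hf, rfl⟩))
  simpa only [← hI] using! forall_commutator_mem_iff_of_isCentral_quotient (k := ℂ) I a

/-- **Weak centrality forces one-dimensional centers of fibers.**
Let `X` be compact Hausdorff and `A` a unital `C(X)`-algebra whose structure map
`Φ : C(X, ℂ) → A` has range exactly the center of `A`.  If `A` is weakly central, then for
every `x : X` with `I_x ≠ A`, the center of the fiber `A/I_x` is `ℂ·1`: an element
`a : A` is central modulo `I_x` iff it is congruent modulo `I_x` to a scalar multiple of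
the unit. -/
theorem weaklyCentral_fiber_center_one_dimensional
    {X A : Type*} [TopologicalSpace X] [CompactSpace X] [T2Space X]
    [NormedRing A] [StarRing A] [CStarRing A]
    [NormedAlgebra ℂ A] [StarModule ℂ A] [CompleteSpace A]
    (Φ : C(X, ℂ) →⋆ₐ[ℂ] A)
    (hΦ : Set.range ⇑Φ = centerSet A)
    (hwc : WeaklyCentral A) :
    ∀ x : X, closedIdealGen (⇑Φ '' {f : C(X, ℂ) | f x = 0}) ≠ Set.univ →
      ∀ a : A,
        (∀ b : A, a * b - b * a ∈ closedIdealGen (⇑Φ '' {f : C(X, ℂ) | f x = 0})) ↔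
          ∃ c : ℂ, a - c • (1 : A) ∈ closedIdealGen (⇑Φ '' {f : C(X, ℂ) | f x = 0}) := by
  intro x _ a
  let _ : CStarAlgebra A := {}
  exact weaklyCentral_fiber_center_one_dimensional_general Φ hΦ.ge hwc
    (ContinuousMap.evalStarAlgHom ℂ ℂ x) a
end

section
/- Let H be an infinite-dimensional separable complex Hilbert space. Then the C*-algebra A = C([0,1], B(H)) of continuous functions from [0,1] into the bounded operators B(H) is weakly central. -/
/-!
Let `X` be compact Hausdorff. A maximal closed ideal `M` of `C(X, A)` is prime with respect to
central elements, so bump functions localize it at a point `t`: every `f` with `f t = 0` lies in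
`M`. Hence `M` is the preimage under evaluation at `t` of a maximal closed ideal of `A`, and since
scalar-valued functions are central, `M ∩ Z` determines both `t` and the trace of that ideal on the
center of `A`. So weak centrality passes from `A` to `C(X, A)`.

For separable `H`, the ring `B(H)` has at most one maximal closed ideal: the identity factors as
`A T B` through every non-compact `T`, so in infinite dimension this ideal consists of the compact
operators, while in finite dimension every nonzero ideal is everything.
-/

open Set Topology InnerProductSpace

section Ideals

variable {R S : Type*} [Ring R] [Ring S] {I : Set R}

namespace IsIdealSet

theorem zero_mem (hI : IsIdealSet I) : (0 : R) ∈ I := hI.1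

theorem add_mem (hI : IsIdealSet I) {x y : R} (hx : x ∈ I) (hy : y ∈ I) : x + y ∈ I :=
  hI.2.1 x hx y hy

theorem neg_mem (hI : IsIdealSet I) {x : R} (hx : x ∈ I) : -x ∈ I := hI.2.2.1 x hx

theorem mul_mem_left (hI : IsIdealSet I) (a : R) {x : R} (hx : x ∈ I) : a * x ∈ I :=
  (hI.2.2.2 x hx a).1

theorem mul_mem_right (hI : IsIdealSet I) (a : R) {x : R} (hx : x ∈ I) : x * a ∈ I :=
  (hI.2.2.2 x hx a).2

theorem eq_univ_of_one_mem (hI : IsIdealSet I) (h : (1 : R) ∈ I) : I = univ :=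
  eq_univ_of_forall fun x => by simpa only [mul_one] using hI.mul_mem_left x h

theorem add_mul_of_mem_center (hI : IsIdealSet I) {z : R} (hz : z ∈ centerSet R) :
    IsIdealSet {r | ∃ m ∈ I, ∃ a, m + z * a = r} := by
  refine ⟨⟨0, hI.zero_mem, 0, by simp⟩, ?_, ?_, ?_⟩
  · rintro _ ⟨m, hm, a, rfl⟩ _ ⟨m', hm', a', rfl⟩
    exact ⟨m + m', hI.add_mem hm hm', a + a', by rw [mul_add]; abel⟩
  · rintro _ ⟨m, hm, a, rfl⟩
    exact ⟨-m, hI.neg_mem hm, -a, by rw [mul_neg]; abel⟩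
  · rintro _ ⟨m, hm, a, rfl⟩ b
    refine ⟨⟨b * m, hI.mul_mem_left b hm, b * a, ?_⟩, ⟨m * b, hI.mul_mem_right b hm, a * b, ?_⟩⟩
    · rw [mul_add, ← mul_assoc, hz b, mul_assoc]
    · rw [add_mul, mul_assoc]

theorem preimage {J : Set S} (hJ : IsIdealSet J) (φ : R →+* S) : IsIdealSet (φ ⁻¹' J) := by
  refine ⟨?_, fun x hx y hy => ?_, fun x hx => ?_, fun x hx a => ⟨?_, ?_⟩⟩
  · simpa only [mem_preimage, map_zero] using hJ.zero_mem
  · simpa only [mem_preimage, map_add] using hJ.add_mem hx hy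
  · simpa only [mem_preimage, map_neg] using hJ.neg_mem hx
  · simpa only [mem_preimage, map_mul] using hJ.mul_mem_left (φ a) hx
  · simpa only [mem_preimage, map_mul] using hJ.mul_mem_right (φ a) hx

theorem image (hI : IsIdealSet I) {φ : R →+* S} (hφ : Function.Surjective φ) :
    IsIdealSet (φ '' I) := by
  refine ⟨⟨0, hI.zero_mem, map_zero φ⟩, ?_, ?_, ?_⟩
  · rintro _ ⟨x, hx, rfl⟩ _ ⟨y, hy, rfl⟩
    exact ⟨x + y, hI.add_mem hx hy, map_add φ x y⟩
  · rintro _ ⟨x, hx, rfl⟩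
    exact ⟨-x, hI.neg_mem hx, map_neg φ x⟩
  · rintro _ ⟨x, hx, rfl⟩ b
    obtain ⟨a, rfl⟩ := hφ b
    exact ⟨⟨a * x, hI.mul_mem_left a hx, map_mul φ a x⟩,
      ⟨x * a, hI.mul_mem_right a hx, map_mul φ x a⟩⟩

theorem map_mem_image_iff (hI : IsIdealSet I) {φ : R →+* S} (hker : ∀ r, φ r = 0 → r ∈ I) {r : R} :
    φ r ∈ φ '' I ↔ r ∈ I := by
  refine ⟨?_, mem_image_of_mem φ⟩
  rintro ⟨x, hx, hxr⟩
  have hsub : r - x ∈ I := hker _ (by rw [map_sub, hxr, sub_self])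
  simpa only [sub_add_cancel] using hI.add_mem hsub hx

variable [TopologicalSpace R] [IsTopologicalRing R]

theorem isClosedIdealSet_closure (hI : IsIdealSet I) : IsClosedIdealSet (closure I) := by
  refine ⟨⟨subset_closure hI.zero_mem, fun x hx y hy => ?_, fun x hx => ?_,
    fun x hx a => ⟨?_, ?_⟩⟩, isClosed_closure⟩
  · exact map_mem_closure₂ continuous_add hx hy fun _ ha _ hb => hI.add_mem ha hb
  · exact map_mem_closure continuous_neg hx fun _ ha => hI.neg_mem ha
  · exact map_mem_closure (continuous_const_mul a) hx fun _ hb => hI.mul_mem_left a hb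
  · exact map_mem_closure (f := (· * a)) (continuous_mul_const a) hx
      fun _ hb => hI.mul_mem_right a hb

end IsIdealSet

variable [TopologicalSpace R] [TopologicalSpace S] {M N : Set R}

namespace IsMaxClosedIdealSet

theorem isIdealSet (hM : IsMaxClosedIdealSet M) : IsIdealSet M := hM.1.1

theorem isClosed (hM : IsMaxClosedIdealSet M) : IsClosed M := hM.1.2

theorem one_notMem (hM : IsMaxClosedIdealSet M) : (1 : R) ∉ M :=
  fun h => hM.2.1 (hM.isIdealSet.eq_univ_of_one_mem h)

theorem eq_of_subset (hM : IsMaxClosedIdealSet M) {T : Set R} (hT : IsClosedIdealSet T)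
    (hMT : M ⊆ T) (h1 : (1 : R) ∉ T) : M = T :=
  ((hM.2.2 T hT hMT).resolve_right fun h => h1 (h ▸ mem_univ 1)).symm

theorem mem_of_mul_mem_of_mem_center [IsTopologicalRing R] (hM : IsMaxClosedIdealSet M) {k z : R}
    (hz : z ∈ centerSet R) (hkz : k * z ∈ M) (hzM : z ∉ M) : k ∈ M := by
  let T : Set R := {r | ∃ m ∈ M, ∃ a, m + z * a = r}
  have hMT : M ⊆ T := fun m hm => ⟨m, hm, 0, by simp⟩
  have hzT : z ∈ T := ⟨0, hM.isIdealSet.zero_mem, 1, by simp⟩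
  have hone : (1 : R) ∈ closure T := by
    by_contra h1
    have hMcl : M = closure T :=
      hM.eq_of_subset (hM.isIdealSet.add_mul_of_mem_center hz).isClosedIdealSet_closure
        (hMT.trans subset_closure) h1
    exact hzM (hMcl ▸ subset_closure hzT)
  have hk : k * 1 ∈ closure M := by
    refine map_mem_closure (continuous_const_mul k) hone ?_
    rintro _ ⟨m, hm, a, rfl⟩
    rw [mul_add, ← mul_assoc]
    exact hM.isIdealSet.add_mem (hM.isIdealSet.mul_mem_left k hm)
      (hM.isIdealSet.mul_mem_right a hkz)
  rwa [mul_one, hM.isClosed.closure_eq] at hk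

theorem image (hM : IsMaxClosedIdealSet M) {φ : R →+* S} (hφ : IsQuotientMap φ)
    (hker : ∀ r, φ r = 0 → r ∈ M) : IsMaxClosedIdealSet (φ '' M) := by
  have hpre : φ ⁻¹' (φ '' M) = M := ext fun _ => hM.isIdealSet.map_mem_image_iff hker
  refine ⟨⟨hM.isIdealSet.image hφ.surjective, ?_⟩, fun h => ?_, fun T hT hMT => ?_⟩
  · rw [← hφ.isClosed_preimage, hpre]
    exact hM.isClosed
  · exact hM.2.1 (by rw [← hpre, h, preimage_univ])
  · have hT' : IsClosedIdealSet (φ ⁻¹' T) := ⟨hT.1.preimage φ, hT.2.preimage hφ.continuous⟩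
    rw [← image_preimage_eq T hφ.surjective]
    rcases hM.2.2 _ hT' (image_subset_iff.mp hMT) with h | h
    · exact Or.inl (by rw [h])
    · exact Or.inr (by rw [h, image_univ_of_surjective hφ.surjective])

theorem not_centerSet_subset (hM : IsMaxClosedIdealSet M) : ¬ centerSet R ⊆ M :=
  fun h => hM.one_notMem (h fun a => by rw [one_mul, mul_one])

end IsMaxClosedIdealSet

theorem WeaklyCentral.of_subsingleton (h : {M : Set R | IsMaxClosedIdealSet M}.Subsingleton) :
    WeaklyCentral R :=
  ⟨fun _ hM => hM.not_centerSet_subset, fun _ _ hM hN _ => h hM hN⟩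

end Ideals

section SoftThreshold

variable {E : Type*} [NormedAddCommGroup E] [NormedSpace ℝ E] {ε : ℝ}

/-- Soft thresholding at level `ε > 0`: the vector `a` is shortened by `ε`, or replaced by `0` if
`‖a‖ ≤ ε`. The maximum in the denominator makes continuity evident. -/
noncomputable def softThreshold (ε : ℝ) (a : E) : E := (1 - ε / max ‖a‖ ε) • a

theorem continuous_softThreshold (hε : 0 < ε) : Continuous (softThreshold ε : E → E) := by
  have hne : ∀ a : E, max ‖a‖ ε ≠ 0 := fun a => (lt_max_of_lt_right hε).ne'
  unfold softThreshold
  fun_prop (disch := exact hne)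

theorem softThreshold_eq_zero (hε : 0 < ε) {a : E} (ha : ‖a‖ ≤ ε) : softThreshold ε a = 0 := by
  rw [softThreshold, max_eq_right ha, div_self hε.ne', sub_self, zero_smul]

theorem norm_sub_softThreshold_le (hε : 0 < ε) (a : E) : ‖a - softThreshold ε a‖ ≤ ε := by
  have hmax : 0 < max ‖a‖ ε := lt_max_of_lt_right hε
  calc ‖a - softThreshold ε a‖ = ε / max ‖a‖ ε * ‖a‖ := by
        rw [softThreshold, sub_smul, one_smul, sub_sub_cancel,
          norm_smul_of_nonneg (div_nonneg hε.le hmax.le)]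
    _ ≤ ε / max ‖a‖ ε * max ‖a‖ ε := by gcongr; exact le_max_left _ _
    _ = ε := div_mul_cancel₀ ε hmax.ne'

end SoftThreshold

section ContinuousMaps

variable {X A : Type*} [TopologicalSpace X]

section TopologicalRing

variable [Ring A] [TopologicalSpace A] [IsTopologicalRing A]

/-- Evaluation at `t` as a ring homomorphism on continuous functions with values in a possibly
noncommutative ring. -/
def evalRingHom (A : Type*) [Ring A] [TopologicalSpace A] [IsTopologicalRing A] (t : X) :
    C(X, A) →+* A :=
  (Pi.evalRingHom (fun _ => A) t).comp ContinuousMap.coeFnRingHom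

theorem isQuotientMap_evalRingHom (t : X) : IsQuotientMap (evalRingHom A t) :=
  .of_inverse ContinuousMap.continuous_const' (continuous_eval_const t) fun _ => rfl

theorem const_mem_centerSet {z : A} (hz : z ∈ centerSet A) :
    ContinuousMap.const X z ∈ centerSet C(X, A) :=
  fun f => ContinuousMap.ext fun x => hz (f x)

variable [Algebra ℝ A] [ContinuousSMul ℝ A]

theorem smul_one_mem_centerSet (g : C(X, ℝ)) : g • (1 : C(X, A)) ∈ centerSet C(X, A) :=
  fun f => ContinuousMap.ext fun x => by simp

theorem IsMaxClosedIdealSet.exists_forall_smul_one_mem_imp_apply_eq_zero [CompactSpace X]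
    [T2Space X] {M : Set C(X, A)} (hM : IsMaxClosedIdealSet M) :
    ∃ t, ∀ g : C(X, ℝ), g • (1 : C(X, A)) ∈ M → g t = 0 := by
  let J : Ideal C(X, ℝ) :=
    { carrier := {g | g • (1 : C(X, A)) ∈ M}
      add_mem' := fun {g h} hg hh => by
        simpa only [mem_ofPred_eq, add_smul] using hM.isIdealSet.add_mem hg hh
      zero_mem' := by simpa only [mem_ofPred_eq, zero_smul] using hM.isIdealSet.zero_mem
      smul_mem' := fun c g hg => by
        have hmul : (c • g) • (1 : C(X, A)) = c • (1 : C(X, A)) * g • (1 : C(X, A)) := by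
          ext x; simp [smul_smul, mul_comm]
        simpa only [mem_ofPred_eq, hmul] using hM.isIdealSet.mul_mem_left _ hg }
  have hJ : J ≠ ⊤ := fun h => hM.one_notMem <| by
    have hone : (1 : C(X, ℝ)) • (1 : C(X, A)) ∈ M := (Ideal.eq_top_iff_one J).mp h
    rwa [one_smul] at hone
  obtain ⟨m, hm, hJm⟩ := Ideal.exists_le_maximal J hJ
  obtain ⟨t, rfl⟩ := (ContinuousMap.ideal_isMaximal_iff m).mp hm
  exact ⟨t, fun g hg => (ContinuousMap.mem_idealOfSet_compl_singleton t g).mp (hJm hg)⟩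

end TopologicalRing

variable [NormedRing A] [NormedAlgebra ℝ A]

theorem IsMaxClosedIdealSet.mem_of_apply_eq_zero [CompactSpace X] {M : Set C(X, A)}
    (hM : IsMaxClosedIdealSet M) {t : X} (ht : ∀ g : C(X, ℝ), g • (1 : C(X, A)) ∈ M → g t = 0)
    {f : C(X, A)} (hf : f t = 0) : f ∈ M := by
  rw [← hM.isClosed.closure_eq, Metric.mem_closure_iff]
  intro δ hδ
  obtain ⟨ε, hε, hεδ⟩ := exists_between hδ
  -- `k` is nonzero at `t` and supported where `‖f‖ ≤ ε`, that is, where `fε = 0`.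
  let k : C(X, ℝ) := ⟨fun x => max 0 (ε - ‖f x‖), by fun_prop⟩
  let fε : C(X, A) :=
    ⟨fun x => softThreshold ε (f x), (continuous_softThreshold hε).comp f.continuous⟩
  have hkM : k • (1 : C(X, A)) ∉ M := fun h => by
    have hkt : max 0 (ε - ‖f t‖) = 0 := ht k h
    rw [hf, norm_zero, sub_zero, max_eq_right hε.le] at hkt
    exact hε.ne' hkt
  have hfk : fε * k • (1 : C(X, A)) = 0 := by
    ext x
    change softThreshold ε (f x) * max 0 (ε - ‖f x‖) • (1 : A) = 0
    rcases le_total ‖f x‖ ε with h | h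
    · rw [softThreshold_eq_zero hε h, zero_mul]
    · rw [max_eq_left (sub_nonpos.mpr h), zero_smul, mul_zero]
  refine ⟨fε, hM.mem_of_mul_mem_of_mem_center (smul_one_mem_centerSet k) ?_ hkM, ?_⟩
  · rw [hfk]
    exact hM.isIdealSet.zero_mem
  · refine lt_of_le_of_lt ((ContinuousMap.dist_le hε.le).mpr fun x => ?_) hεδ
    rw [dist_eq_norm]
    exact norm_sub_softThreshold_le hε (f x)

theorem WeaklyCentral.continuousMap [CompactSpace X] [T2Space X] (hA : WeaklyCentral A) :
    WeaklyCentral C(X, A) := by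
  refine ⟨fun M hM => hM.not_centerSet_subset, fun M N hM hN hMN => ?_⟩
  have hiff : ∀ z ∈ centerSet C(X, A), (z ∈ M ↔ z ∈ N) := fun z hz => by
    simpa only [mem_inter_iff, hz, and_true] using Set.ext_iff.mp hMN z
  obtain ⟨t, htM⟩ := hM.exists_forall_smul_one_mem_imp_apply_eq_zero
  have htN : ∀ g : C(X, ℝ), g • (1 : C(X, A)) ∈ N → g t = 0 :=
    fun g hg => htM g ((hiff _ (smul_one_mem_centerSet g)).mpr hg)
  have hkerM : ∀ f, evalRingHom A t f = 0 → f ∈ M := fun f => hM.mem_of_apply_eq_zero htM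
  have hkerN : ∀ f, evalRingHom A t f = 0 → f ∈ N := fun f => hN.mem_of_apply_eq_zero htN
  have himage : evalRingHom A t '' M = evalRingHom A t '' N := by
    refine hA.2 _ _ (hM.image (isQuotientMap_evalRingHom t) hkerM)
      (hN.image (isQuotientMap_evalRingHom t) hkerN) (Set.ext fun z => and_congr_left fun hz => ?_)
    change evalRingHom A t (ContinuousMap.const X z) ∈ _ ↔
      evalRingHom A t (ContinuousMap.const X z) ∈ _
    rw [hM.isIdealSet.map_mem_image_iff hkerM, hN.isIdealSet.map_mem_image_iff hkerN]
    exact hiff _ (const_mem_centerSet hz)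
  ext f
  rw [← hM.isIdealSet.map_mem_image_iff hkerM, himage, hN.isIdealSet.map_mem_image_iff hkerN]

end ContinuousMaps

section HilbertSpaces

variable {𝕜 E F : Type*} [RCLike 𝕜] [NormedAddCommGroup E] [InnerProductSpace 𝕜 E]
  [NormedAddCommGroup F] [InnerProductSpace 𝕜 F] {ι : Type*}

theorem countable_of_orthonormal [TopologicalSpace.SeparableSpace E] {v : ι → E}
    (hv : Orthonormal 𝕜 v) : Countable ι := by
  have hdisj : Pairwise (Function.onFun Disjoint fun i => Metric.ball (v i) (1 / 2)) := by
    intro i j hij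
    have hsq : ‖v i - v j‖ ^ 2 = 2 := by
      rw [@norm_sub_sq 𝕜, hv.2 hij, hv.1, hv.1]; norm_num
    apply Metric.ball_disjoint_ball
    rw [dist_eq_norm]
    nlinarith [norm_nonneg (v i - v j)]
  exact hdisj.countable_of_isOpen_disjoint (fun _ => Metric.isOpen_ball)
    fun i => ⟨v i, Metric.mem_ball_self one_half_pos⟩

theorem hasSum_norm_sq_of_pairwise_inner_eq_zero {v : ι → E} {x : E}
    (hv : Pairwise fun i j => inner 𝕜 (v i) (v j) = 0) (hx : HasSum v x) :
    HasSum (fun i => ‖v i‖ ^ 2) (‖x‖ ^ 2) := by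
  have hcoeff : ∀ i, inner 𝕜 (v i) x = inner 𝕜 (v i) (v i) := fun i =>
    (hx.mapL (innerSL 𝕜 (v i))).unique (hasSum_single i fun j hji => hv hji.symm)
  have hsum : HasSum (fun i => RCLike.re (inner 𝕜 x (v i))) (RCLike.re (inner 𝕜 x x)) :=
    (hx.mapL (innerSL 𝕜 x)).mapL RCLike.reCLM
  simpa only [inner_re_symm (𝕜 := 𝕜) x, hcoeff, inner_self_eq_norm_sq] using hsum

theorem mul_norm_le_norm_apply_of_hilbertBasis (b : HilbertBasis ι 𝕜 E) (S : E →L[𝕜] F)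
    (horth : Pairwise fun i j => inner 𝕜 (S (b i)) (S (b j)) = 0) {ε : ℝ} (hε : 0 ≤ ε)
    (hlow : ∀ i, ε ≤ ‖S (b i)‖) (x : E) : ε * ‖x‖ ≤ ‖S x‖ := by
  have hx : HasSum (fun i => ‖b.repr x i • b i‖ ^ 2) (‖x‖ ^ 2) := by
    refine hasSum_norm_sq_of_pairwise_inner_eq_zero (𝕜 := 𝕜) (fun i j hij => ?_) (b.hasSum_repr x)
    beta_reduce
    rw [inner_smul_left, inner_smul_right, b.orthonormal.2 hij, mul_zero, mul_zero]
  have hSx : HasSum (fun i => ‖S (b.repr x i • b i)‖ ^ 2) (‖S x‖ ^ 2) := by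
    refine hasSum_norm_sq_of_pairwise_inner_eq_zero (𝕜 := 𝕜) (fun i j hij => ?_)
      ((b.hasSum_repr x).mapL S)
    beta_reduce
    rw [map_smul, map_smul, inner_smul_left, inner_smul_right, horth hij, mul_zero, mul_zero]
  refine le_of_sq_le_sq ?_ (norm_nonneg _)
  rw [mul_pow]
  refine hasSum_le (fun i => ?_) (hx.mul_left (ε ^ 2)) hSx
  rw [map_smul, norm_smul, norm_smul, b.orthonormal.1, mul_one, mul_pow, mul_comm]
  gcongr
  exact hlow i

theorem exists_linearIsometry_apply_hilbertBasis [CompleteSpace F] (b : HilbertBasis ι 𝕜 E)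
    {v : ι → F} (hv : Orthonormal 𝕜 v) : ∃ V : E →ₗᵢ[𝕜] F, ∀ i, V (b i) = v i := by
  classical
  refine ⟨hv.orthogonalFamily.linearIsometry.comp b.repr.toLinearIsometry, fun i => ?_⟩
  simp [b.repr_self, hv.orthogonalFamily.linearIsometry_apply_single]

theorem isCompactOperator_of_forall_exists_finiteDimensional {G : Type*} [NormedAddCommGroup G]
    [NormedSpace 𝕜 G] [CompleteSpace G] (T : E →L[𝕜] G)
    (h : ∀ ε > 0, ∃ U : Submodule 𝕜 E, FiniteDimensional 𝕜 U ∧ ∀ x ∈ Uᗮ, ‖T x‖ ≤ ε * ‖x‖) :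
    IsCompactOperator T := by
  have hclosed : IsClosed {S : E →L[𝕜] G | IsCompactOperator S} :=
    isClosed_setOfPred_isCompactOperator
  suffices T ∈ closure {S : E →L[𝕜] G | IsCompactOperator S} by rwa [hclosed.closure_eq] at this
  rw [Metric.mem_closure_iff]
  intro δ hδ
  obtain ⟨ε, hε, hεδ⟩ := exists_between hδ
  obtain ⟨U, hU, hTU⟩ := h ε hε
  have : ProperSpace U := FiniteDimensional.proper 𝕜 U
  refine ⟨T ∘L U.starProjection, ?_, lt_of_le_of_lt ?_ hεδ⟩
  · exact (isCompactOperator_of_locallyCompactSpace_dom U.orthogonalProjectionOnto).clm_comp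
      (T ∘L U.subtypeL)
  · rw [dist_eq_norm]
    refine ContinuousLinearMap.opNorm_le_bound _ hε.le fun x => ?_
    calc ‖(T - T ∘L U.starProjection) x‖ = ‖T (Uᗮ.starProjection x)‖ := by
          simp [Submodule.starProjection_orthogonal]
      _ ≤ ε * ‖Uᗮ.starProjection x‖ := hTU _ (Submodule.starProjection_apply_mem _ x)
      _ ≤ ε * ‖x‖ := by gcongr; exact Submodule.norm_starProjection_apply_le _ x

variable [CompleteSpace E] [CompleteSpace F]

theorem exists_comp_eq_id_of_mul_norm_le_norm_apply (S : E →L[𝕜] F) {ε : ℝ} (hε : 0 < ε)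
    (hS : ∀ x, ε * ‖x‖ ≤ ‖S x‖) : ∃ A : F →L[𝕜] E, A ∘L S = .id 𝕜 E := by
  have hunit : IsUnit (S.adjoint ∘L S) := by
    refine ContinuousLinearMap.isUnit_of_forall_le_norm_inner_map _
      (c := ⟨ε ^ 2, by positivity⟩) (by exact pow_pos hε 2) fun x => ?_
    calc ‖x‖ ^ 2 * ε ^ 2 = (ε * ‖x‖) ^ 2 := by ring
      _ ≤ ‖S x‖ ^ 2 := by gcongr; exact hS x
      _ = ‖inner 𝕜 ((S.adjoint ∘L S) x) x‖ := by
        rw [ContinuousLinearMap.comp_apply, ContinuousLinearMap.adjoint_inner_left,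
          inner_self_eq_norm_sq_to_K, norm_pow, RCLike.norm_ofReal, abs_norm]
  obtain ⟨B, hB⟩ := hunit.exists_left_inv
  exact ⟨B ∘L S.adjoint, hB⟩

theorem exists_orthonormal_seq_of_not_isCompactOperator {T : E →L[𝕜] F}
    (hT : ¬ IsCompactOperator T) :
    ∃ ε > 0, ∃ v : ℕ → E, Orthonormal 𝕜 v ∧ (∀ n, ε ≤ ‖T (v n)‖) ∧
      Pairwise fun m n => inner 𝕜 (T (v m)) (T (v n)) = 0 := by
  classical
  obtain ⟨ε, hε, hfar⟩ : ∃ ε > 0, ∀ U : Submodule 𝕜 E, FiniteDimensional 𝕜 U →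
      ∃ x ∈ Uᗮ, ε * ‖x‖ < ‖T x‖ := by
    by_contra! h
    exact hT (isCompactOperator_of_forall_exists_finiteDimensional T h)
  have hunit (U : Submodule 𝕜 E) (hU : FiniteDimensional 𝕜 U) :
      ∃ x ∈ Uᗮ, ‖x‖ = 1 ∧ ε ≤ ‖T x‖ := by
    obtain ⟨x, hxU, hx⟩ := hfar U hU
    have hx0 : x ≠ 0 := by rintro rfl; simp at hx
    refine ⟨(‖x‖ : 𝕜)⁻¹ • x, Uᗮ.smul_mem _ hxU, norm_smul_inv_norm hx0, ?_⟩
    rw [map_smul, norm_smul, norm_inv, RCLike.norm_ofReal, abs_norm,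
      le_inv_mul_iff₀ (norm_pos_iff.mpr hx0), mul_comm]
    exact hx.le
  have : Std.Symm fun x y : E => inner 𝕜 x y = 0 ∧ inner 𝕜 (T x) (T y) = 0 :=
    ⟨fun _ _ h => h.imp inner_eq_zero_symm.mp inner_eq_zero_symm.mp⟩
  obtain ⟨v, hv, hpair⟩ := exists_seq_of_forall_finset_exists'
    (fun x : E => ‖x‖ = 1 ∧ ε ≤ ‖T x‖)
    (fun x y => inner 𝕜 x y = 0 ∧ inner 𝕜 (T x) (T y) = 0) fun s _ => by
      -- Orthogonality of `T x` and `T y` amounts to orthogonality of `T† T x` and `y`.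
      obtain ⟨y, hy, hy_norm, hTy⟩ := hunit (Submodule.span 𝕜
        ((s ∪ s.image fun x => T.adjoint (T x) : Finset E) : Set E))
        (FiniteDimensional.span_finset 𝕜 _)
      have hmem {x : E} (hx : x ∈ s ∪ s.image fun x => T.adjoint (T x)) : inner 𝕜 x y = 0 :=
        (Submodule.mem_orthogonal _ y).mp hy x (Submodule.subset_span hx)
      refine ⟨y, ⟨hy_norm, hTy⟩, fun x hx => ⟨hmem (Finset.mem_union_left _ hx), ?_⟩⟩
      rw [← ContinuousLinearMap.adjoint_inner_left]
      exact hmem (Finset.mem_union_right _ (Finset.mem_image_of_mem _ hx))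
  exact ⟨ε, hε, v, ⟨fun n => (hv n).1, fun m n hmn => (hpair hmn).1⟩, fun n => (hv n).2,
    fun m n hmn => (hpair hmn).2⟩

theorem exists_comp_comp_eq_id_of_not_isCompactOperator {G : Type*} [NormedAddCommGroup G]
    [InnerProductSpace 𝕜 G] [CompleteSpace G] [TopologicalSpace.SeparableSpace G]
    {T : E →L[𝕜] F} (hT : ¬ IsCompactOperator T) :
    ∃ (A : F →L[𝕜] G) (B : G →L[𝕜] E), A ∘L T ∘L B = .id 𝕜 G := by
  obtain ⟨ε, hε, v, hv, hlow, horth⟩ := exists_orthonormal_seq_of_not_isCompactOperator hT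
  obtain ⟨w, b, -⟩ := exists_hilbertBasis 𝕜 G
  have : Countable w := countable_of_orthonormal b.orthonormal
  obtain ⟨e, he⟩ := exists_injective_nat w
  obtain ⟨V, hV⟩ := exists_linearIsometry_apply_hilbertBasis b (hv.comp e he)
  have hTV : ∀ i, (T ∘L V.toContinuousLinearMap) (b i) = T (v (e i)) := fun i => congrArg T (hV i)
  obtain ⟨A, hA⟩ := exists_comp_eq_id_of_mul_norm_le_norm_apply _ hε <|
    mul_norm_le_norm_apply_of_hilbertBasis b (T ∘L V.toContinuousLinearMap)
      (fun i j hij => by simpa only [hTV] using horth (he.ne hij)) hε.le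
      (fun i => by simpa only [hTV] using hlow (e i))
  exact ⟨A, V.toContinuousLinearMap, hA⟩

end HilbertSpaces

section BoundedOperators

variable {𝕜 H : Type*} [RCLike 𝕜] [NormedAddCommGroup H] [InnerProductSpace 𝕜 H]
  {I M : Set (H →L[𝕜] H)}

theorem IsIdealSet.rankOne_mem (hI : IsIdealSet I) {T : H →L[𝕜] H} (hT : T ∈ I) (hT0 : T ≠ 0)
    (x y : H) : rankOne 𝕜 x y ∈ I := by
  obtain ⟨v, hv⟩ : ∃ v, T v ≠ 0 := by
    by_contra! h
    exact hT0 (ContinuousLinearMap.ext h)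
  have hfactor : rankOne 𝕜 ((inner 𝕜 (T v) (T v))⁻¹ • x) (T v) * T * rankOne 𝕜 v y
      = rankOne 𝕜 x y := by
    ext z
    have hTv : (‖T v‖ : 𝕜) ≠ 0 := by simpa using hv
    simp only [inner_self_eq_norm_sq_to_K, map_smul, smul_apply, Algebra.smul_mul_assoc,
      mul_apply_eq_comp, rankOne_apply, smul_smul]
    field_simp
  rw [← hfactor]
  exact hI.mul_mem_right _ (hI.mul_mem_left _ hT)

theorem IsIdealSet.one_mem_of_finiteDimensional [FiniteDimensional 𝕜 H] (hI : IsIdealSet I)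
    {T : H →L[𝕜] H} (hT : T ∈ I) (hT0 : T ≠ 0) : (1 : H →L[𝕜] H) ∈ I := by
  have hsum : ∑ i, rankOne 𝕜 (stdOrthonormalBasis 𝕜 H i) (stdOrthonormalBasis 𝕜 H i) = 1 :=
    (stdOrthonormalBasis 𝕜 H).sum_rankOne_eq_id
  rw [← hsum]
  exact Finset.sum_induction _ (· ∈ I) (fun _ _ => hI.add_mem) hI.zero_mem
    fun i _ => hI.rankOne_mem hT hT0 _ _

theorem IsMaxClosedIdealSet.eq_singleton_zero_of_finiteDimensional [FiniteDimensional 𝕜 H]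
    (hM : IsMaxClosedIdealSet M) : M = {0} := by
  refine eq_singleton_iff_unique_mem.mpr ⟨hM.isIdealSet.zero_mem, fun T hT => ?_⟩
  by_contra hT0
  exact hM.one_notMem (hM.isIdealSet.one_mem_of_finiteDimensional hT hT0)

theorem isClosedIdealSet_isCompactOperator [CompleteSpace H] :
    IsClosedIdealSet {T : H →L[𝕜] H | IsCompactOperator T} :=
  ⟨⟨isCompactOperator_zero, fun _ hS _ hT => hS.add hT, fun _ hT => hT.neg,
    fun _ hT S => ⟨hT.clm_comp S, hT.comp_clm S⟩⟩, isClosed_setOfPred_isCompactOperator⟩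

variable [CompleteSpace H] [TopologicalSpace.SeparableSpace H]

theorem IsMaxClosedIdealSet.eq_setOf_isCompactOperator (hinf : ¬ FiniteDimensional 𝕜 H)
    (hM : IsMaxClosedIdealSet M) : M = {T : H →L[𝕜] H | IsCompactOperator T} := by
  refine hM.eq_of_subset isClosedIdealSet_isCompactOperator (fun T hT => ?_) fun h => ?_
  · by_contra hcomp
    obtain ⟨A, B, hAB⟩ := exists_comp_comp_eq_id_of_not_isCompactOperator (G := H) hcomp
    have hmem : A * (T * B) ∈ M :=
      hM.isIdealSet.mul_mem_left A (hM.isIdealSet.mul_mem_right B hT)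
    have hone : A * (T * B) = 1 := hAB
    exact hM.one_notMem (hone ▸ hmem)
  · exact hinf (isCompactOperator_id_iff_finiteDimensional.mp h)

theorem weaklyCentral_boundedOperators : WeaklyCentral (H →L[𝕜] H) := by
  refine .of_subsingleton fun M hM N hN => ?_
  by_cases hfin : FiniteDimensional 𝕜 H
  · exact hM.eq_singleton_zero_of_finiteDimensional.trans
      hN.eq_singleton_zero_of_finiteDimensional.symm
  · rw [hM.eq_setOf_isCompactOperator hfin, hN.eq_setOf_isCompactOperator hfin]

end BoundedOperators

theorem weaklyCentral_continuousMap_boundedOperators_general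
    {X : Type*} [TopologicalSpace X] [CompactSpace X] [T2Space X] {𝕜 : Type*} [RCLike 𝕜]
    {H : Type*} [NormedAddCommGroup H] [InnerProductSpace 𝕜 H] [CompleteSpace H]
    [TopologicalSpace.SeparableSpace H] : WeaklyCentral C(X, H →L[𝕜] H) :=
  letI : NormedAlgebra ℝ (H →L[𝕜] H) := .restrictScalars ℝ 𝕜 _
  WeaklyCentral.continuousMap (A := H →L[𝕜] H) weaklyCentral_boundedOperators

open TopologicalSpace in
/-- **`C([0,1], B(H))` is weakly central** for an infinite-dimensional separable complex
Hilbert space `H`. -/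
theorem weaklyCentral_continuousMap_boundedOperators
    {H : Type*} [NormedAddCommGroup H] [InnerProductSpace ℂ H] [CompleteSpace H]
    [SeparableSpace H] (hinf : ¬ FiniteDimensional ℂ H) :
    WeaklyCentral C(unitInterval, H →L[ℂ] H) :=
  weaklyCentral_continuousMap_boundedOperators_general
end

section
/- Let 𝕋 ⊆ ℂ be the unit circle and let A be the set of continuous functions f : 𝕋 × [0,1] → M₂(ℂ) such that for every z ∈ 𝕋 and every t ∈ {0,1} there exist a, b ∈ ℂ with f(z,t) = [[a, z·b],[b, a]] (i.e. entries f(z,t)₁₁ = f(z,t)₂₂ and f(z,t)₁₂ = z·f(z,t)₂₁). Then A is a unital C*-subalgebra of C(𝕋 × [0,1], M₂(ℂ)) and A is not weakly central. -/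
section RelativeDefs
variable {R : Type*}

/-- A closed two-sided ideal of the subalgebra `𝒜 ⊆ R`, as a subset of `R`. -/
def IsClosedIdealIn [NonUnitalNonAssocRing R] [TopologicalSpace R] (𝒜 M : Set R) : Prop :=
  M ⊆ 𝒜 ∧ (0 : R) ∈ M ∧ (∀ x ∈ M, ∀ y ∈ M, x + y ∈ M) ∧ (∀ x ∈ M, -x ∈ M) ∧
    (∀ x ∈ M, ∀ a ∈ 𝒜, a * x ∈ M ∧ x * a ∈ M) ∧ IsClosed M

/-- A maximal (proper) closed two-sided ideal of the subalgebra `𝒜 ⊆ R`. -/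
def IsMaxClosedIdealIn [NonUnitalNonAssocRing R] [TopologicalSpace R] (𝒜 M : Set R) : Prop :=
  IsClosedIdealIn 𝒜 M ∧ M ≠ 𝒜 ∧
    ∀ T : Set R, IsClosedIdealIn 𝒜 T → M ⊆ T → T = M ∨ T = 𝒜

/-- A two-sided ideal of the subalgebra `𝒜 ⊆ R` (no closedness). -/
def IsIdealIn [NonUnitalNonAssocRing R] (𝒜 M : Set R) : Prop :=
  M ⊆ 𝒜 ∧ (0 : R) ∈ M ∧ (∀ x ∈ M, ∀ y ∈ M, x + y ∈ M) ∧ (∀ x ∈ M, -x ∈ M) ∧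
    ∀ x ∈ M, ∀ a ∈ 𝒜, a * x ∈ M ∧ x * a ∈ M

/-- A maximal (proper) two-sided ideal of the subalgebra `𝒜 ⊆ R`. -/
def IsMaxIdealIn [NonUnitalNonAssocRing R] (𝒜 M : Set R) : Prop :=
  IsIdealIn 𝒜 M ∧ M ≠ 𝒜 ∧ ∀ T : Set R, IsIdealIn 𝒜 T → M ⊆ T → T = M ∨ T = 𝒜

/-- The center of the subalgebra `𝒜 ⊆ R`, as a subset of `R`. -/
def centerIn [Mul R] (𝒜 : Set R) : Set R := {z ∈ 𝒜 | ∀ a ∈ 𝒜, z * a = a * z}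

/-- Weak centrality of the subalgebra `𝒜 ⊆ R`: no maximal closed two-sided ideal of `𝒜`
contains the center of `𝒜`, and `M ↦ M ∩ Z(𝒜)` is injective on maximal closed two-sided
ideals of `𝒜`. -/
def WeaklyCentralIn [NonUnitalNonAssocRing R] [TopologicalSpace R] (𝒜 : Set R) : Prop :=
  (∀ M : Set R, IsMaxClosedIdealIn 𝒜 M → ¬ centerIn 𝒜 ⊆ M) ∧
    ∀ M N : Set R, IsMaxClosedIdealIn 𝒜 M → IsMaxClosedIdealIn 𝒜 N →
      M ∩ centerIn 𝒜 = N ∩ centerIn 𝒜 → M = N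

end RelativeDefs

/-- The unit circle in `ℂ`. -/
abbrev UnitCircle : Type := {z : ℂ // ‖z‖ = 1}

/-- The cylinder `𝕋 × [0,1]`. -/
abbrev Cylinder : Type := UnitCircle × unitInterval

/-- The C*-algebra of the wallpaper group, realized inside `C(𝕋 × [0,1], M₂(ℂ))`:
continuous matrix-valued functions whose values at `(z, 0)` and `(z, 1)` have the form
`[[a, z·b], [b, a]]`. -/
def WallpaperAlg : Set C(Cylinder, Matrix (Fin 2) (Fin 2) ℂ) :=
  {f | ∀ z : UnitCircle, ∀ t : unitInterval, (t = 0 ∨ t = 1) →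
    ∃ a b : ℂ, f (z, t) = !![a, (z : ℂ) * b; b, a]}

/-!
At a boundary point `(z, t)` the values of the algebra commute with the unitary `[[0, z], [1, 0]]`,
so each square root `w` of `z` gives a character: the eigenvalue on the eigenvector `(w, 1)`. A
central element commutes with all matrices at interior points, hence by continuity is scalar at
every point, and there the characters for `w` and `-w` agree. Their kernels are distinct maximal
closed ideals with the same intersection with the center.
-/

theorem isClosedIdealIn_image_ker {R σ K F : Type*} [NonUnitalNonAssocRing R] [TopologicalSpace R]
    [SetLike σ R] [NonUnitalSubringClass σ R] [NonUnitalNonAssocRing K] [TopologicalSpace K]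
    [T1Space K] {S : σ} [FunLike F S K] [NonUnitalRingHomClass F S K] (hS : IsClosed (S : Set R))
    {φ : F} (hφ : Continuous φ) :
    IsClosedIdealIn (S : Set R) (Subtype.val '' (φ ⁻¹' {0})) := by
  refine ⟨Subtype.coe_image_subset _ _, ⟨0, map_zero φ, rfl⟩, ?add, ?neg, ?mul, ?closed⟩
  case add =>
    rintro _ ⟨f, hf : φ f = 0, rfl⟩ _ ⟨g, hg : φ g = 0, rfl⟩
    have h_add : φ (f + g) = 0 := by rw [map_add, hf, hg, add_zero]
    exact ⟨f + g, h_add, rfl⟩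
  case neg =>
    rintro _ ⟨f, hf : φ f = 0, rfl⟩
    have h_neg : φ (-f) = 0 := by rw [map_neg, hf, neg_zero]
    exact ⟨-f, h_neg, rfl⟩
  case mul =>
    rintro _ ⟨f, hf : φ f = 0, rfl⟩ a ha
    lift a to S using ha
    have h_left : φ (a * f) = 0 := by rw [map_mul, hf, mul_zero]
    have h_right : φ (f * a) = 0 := by rw [map_mul, hf, zero_mul]
    exact ⟨⟨a * f, h_left, rfl⟩, ⟨f * a, h_right, rfl⟩⟩
  case closed =>
    exact hS.isClosedEmbedding_subtypeVal.isClosedMap _ (isClosed_singleton.preimage hφ)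

theorem isMaxClosedIdealIn_image_ker {R σ K F : Type*} [NonUnitalNonAssocRing R]
    [TopologicalSpace R] [SetLike σ R] [NonUnitalSubringClass σ R] [DivisionRing K]
    [TopologicalSpace K] [T1Space K] {S : σ} [FunLike F S K] [NonUnitalRingHomClass F S K]
    (hS : IsClosed (S : Set R)) {φ : F} (hφ : Continuous φ) (hφ_surj : Function.Surjective φ) :
    IsMaxClosedIdealIn (S : Set R) (Subtype.val '' (φ ⁻¹' {0})) := by
  have mem_image {f : S} : (f : R) ∈ Subtype.val '' (φ ⁻¹' {0}) ↔ φ f = 0 :=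
    Subtype.val_injective.mem_set_image
  refine ⟨isClosedIdealIn_image_ker hS hφ, fun h_eq ↦ ?proper, ?maximal⟩
  case proper =>
    obtain ⟨f, hf⟩ := hφ_surj 1
    exact one_ne_zero (hf.symm.trans (mem_image.1 (h_eq ▸ f.2)))
  case maximal =>
    rintro T ⟨hTS, -, hT_add, -, hT_mul, -⟩ h_ker_le
    refine or_iff_not_imp_left.2 fun h_ne ↦ hTS.antisymm fun f hf ↦ ?_
    obtain ⟨g, hgT, hg⟩ := Set.not_subset.1 fun h ↦ h_ne (h.antisymm h_ker_le)
    lift f to S using hf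
    lift g to S using hTS hgT
    obtain ⟨c, hc⟩ := hφ_surj (φ f * (φ g)⁻¹)
    have h_sub : (↑(f - c * g) : R) ∈ T := h_ker_le <| mem_image.2 <| by
      rw [map_sub, map_mul, hc, inv_mul_cancel_right₀ (mt mem_image.2 hg), sub_self]
    simpa using hT_add _ h_sub _ (hT_mul _ hgT c c.2).1

theorem not_weaklyCentralIn_of_characterSpace {k R : Type*} [Field k] [TopologicalSpace k]
    [T1Space k] [ContinuousAdd k] [ContinuousConstSMul k k] [Ring R] [Algebra k R]
    [TopologicalSpace R] {S : Subalgebra k R} (hS : IsClosed (S : Set R))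
    {χ ψ : WeakDual.characterSpace k S} (h_ne : χ ≠ ψ)
    (h_center : ∀ f : S, (f : R) ∈ centerIn (S : Set R) → χ f = ψ f) :
    ¬ WeaklyCentralIn (S : Set R) := by
  rintro ⟨-, h_inj⟩
  have maximal (θ : WeakDual.characterSpace k S) :
      IsMaxClosedIdealIn (S : Set R) (Subtype.val '' (θ ⁻¹' {0})) :=
    isMaxClosedIdealIn_image_ker hS (map_continuous θ)
      fun c ↦ ⟨algebraMap k S c, AlgHomClass.commutes θ c⟩
  have h_image : Subtype.val '' (χ ⁻¹' {0}) = Subtype.val '' (ψ ⁻¹' {0}) := by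
    refine h_inj _ _ (maximal χ) (maximal ψ) (Set.ext fun f ↦ and_congr_left fun hf ↦ ?_)
    lift f to S using hf.1
    simp only [Subtype.val_injective.mem_set_image, Set.mem_preimage, h_center f hf]
  exact h_ne <| WeakDual.CharacterSpace.ext_ker <| SetLike.coe_injective <|
    Subtype.val_injective.image_injective h_image

theorem commute_apply_of_mem_centerIn {X k R : Type*} [TopologicalSpace X] [GroupWithZero k]
    [Mul R] [MulAction k R] [IsScalarTower k R R] [SMulCommClass k R R] [TopologicalSpace R]
    [ContinuousMul R] [T2Space R] {𝒜 : Set C(X, R)} {f g : C(X, R)} (hf : f ∈ centerIn 𝒜)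
    (hg : g ∈ 𝒜) {M : R} {u : X → k} (hu : Dense {x | u x ≠ 0}) (hgu : ∀ x, g x = u x • M)
    (x : X) : Commute (f x) M := by
  have h_dense : Set.EqOn (fun x ↦ f x * M) (fun x ↦ M * f x) {x | u x ≠ 0} := by
    intro x hx
    have h_comm : Commute (f x) (g x) := DFunLike.congr_fun (hf.2 g hg) x
    rwa [hgu, Commute.smul_right_iff₀ hx] at h_comm
  exact congrFun (Continuous.ext_on hu (by fun_prop) (by fun_prop) h_dense) x

/-- The unitary `[[0, z], [1, 0]]`, whose commutant is the fiber of `WallpaperAlg` over the boundary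
points `(z, 0)` and `(z, 1)`. -/
def fiberUnitary (z : UnitCircle) : Matrix (Fin 2) (Fin 2) ℂ := !![0, z; 1, 0]

theorem fiberUnitary_mem_unitaryGroup (z : UnitCircle) :
    fiberUnitary z ∈ Matrix.unitaryGroup (Fin 2) ℂ := by
  have hz : (z : ℂ) * starRingEnd ℂ z = 1 := by
    rw [Complex.mul_conj', z.2, Complex.ofReal_one, one_pow]
  rw [Matrix.mem_unitaryGroup_iff]
  ext i j
  fin_cases i <;> fin_cases j <;> simp [fiberUnitary, Matrix.mul_apply, hz]

theorem fiberUnitary_mem_centralizer {z : UnitCircle} :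
    fiberUnitary z ∈ StarSubalgebra.centralizer ℂ {fiberUnitary z} := by
  simp only [StarSubalgebra.mem_centralizer_iff, Set.mem_singleton_iff, forall_eq, true_and]
  exact commute_unitary_star_self (fiberUnitary_mem_unitaryGroup z)

theorem mem_centralizer_fiberUnitary_iff {z : UnitCircle} {M : Matrix (Fin 2) (Fin 2) ℂ} :
    M ∈ StarSubalgebra.centralizer ℂ {fiberUnitary z} ↔
      ∃ a b : ℂ, M = !![a, (z : ℂ) * b; b, a] := by
  constructor
  · intro hM
    have h := (StarSubalgebra.mem_centralizer_iff ℂ).1 hM _ rfl |>.1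
    have h₀₁ : (z : ℂ) * M 1 0 = M 0 1 := by
      simpa [fiberUnitary, Matrix.mul_apply, Fin.sum_univ_two] using congrFun₂ h 0 0
    have h₁₁ : M 0 0 = M 1 1 := by
      simpa [fiberUnitary, Matrix.mul_apply, Fin.sum_univ_two] using congrFun₂ h 1 0
    refine ⟨M 0 0, M 1 0, (Matrix.eta_fin_two M).trans ?_⟩
    rw [h₀₁, h₁₁]
  · rintro ⟨a, b, rfl⟩
    have h_span : !![a, (z : ℂ) * b; b, a] = algebraMap ℂ _ a + b • fiberUnitary z := by
      ext i j
      fin_cases i <;> fin_cases j <;> simp [fiberUnitary, Matrix.algebraMap_eq_diagonal, mul_comm]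
    rw [h_span]
    exact add_mem (algebraMap_mem _ a) (SMulMemClass.smul_mem b fiberUnitary_mem_centralizer)

theorem mem_wallpaperAlg_iff {f : C(Cylinder, Matrix (Fin 2) (Fin 2) ℂ)} :
    f ∈ WallpaperAlg ↔ ∀ z : UnitCircle, ∀ t : unitInterval, (t = 0 ∨ t = 1) →
      f (z, t) ∈ StarSubalgebra.centralizer ℂ {fiberUnitary z} := by
  simp only [mem_centralizer_fiberUnitary_iff]
  rfl

/-- `WallpaperAlg` as a unital star subalgebra of `C(𝕋 × [0,1], M₂(ℂ))`. -/
def wallpaperStarSubalgebra : StarSubalgebra ℂ C(Cylinder, Matrix (Fin 2) (Fin 2) ℂ) where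
  carrier := WallpaperAlg
  mul_mem' hf hg := mem_wallpaperAlg_iff.2 fun z t ht ↦
    mul_mem (mem_wallpaperAlg_iff.1 hf z t ht) (mem_wallpaperAlg_iff.1 hg z t ht)
  add_mem' hf hg := mem_wallpaperAlg_iff.2 fun z t ht ↦
    add_mem (mem_wallpaperAlg_iff.1 hf z t ht) (mem_wallpaperAlg_iff.1 hg z t ht)
  algebraMap_mem' c := mem_wallpaperAlg_iff.2 fun _ _ _ ↦ algebraMap_mem _ c
  star_mem' hf := mem_wallpaperAlg_iff.2 fun z t ht ↦ star_mem (mem_wallpaperAlg_iff.1 hf z t ht)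

theorem isClosed_wallpaperAlg : IsClosed WallpaperAlg := by
  have h_inter : WallpaperAlg = ⋂ (z : UnitCircle) (t : unitInterval) (_ : t = 0 ∨ t = 1),
      (fun f ↦ f (z, t)) ⁻¹' (StarSubalgebra.centralizer ℂ {fiberUnitary z} : Set _) := by
    ext f
    simp only [mem_wallpaperAlg_iff, Set.mem_iInter, Set.mem_preimage, SetLike.mem_coe]
  rw [h_inter]
  refine isClosed_iInter fun z ↦ isClosed_iInter fun t ↦ isClosed_iInter fun _ ↦ ?_
  exact (Set.isClosed_centralizer _).preimage (continuous_eval_const (z, t))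

theorem dense_setOf_mul_one_sub_ne_zero : Dense {p : Cylinder | (p.2 : ℂ) * (1 - p.2) ≠ 0} := by
  have h_compl : Dense ({0, 1}ᶜ : Set unitInterval) := by
    rw [Set.compl_eq_univ_sdiff]
    exact dense_univ.sdiff_finite (Set.toFinite _)
  refine (h_compl.preimage (isOpenMap_snd (X := UnitCircle))).mono fun p hp ↦ ?_
  have hp' : p.2 ≠ 0 ∧ p.2 ≠ 1 := by simpa using hp
  have h₀ : (p.2 : ℂ) ≠ 0 := by simpa using hp'.1
  have h₁ : (1 - p.2 : ℂ) ≠ 0 := fun h ↦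
    hp'.2 (Subtype.ext (by exact_mod_cast (sub_eq_zero.1 h).symm))
  exact mul_ne_zero h₀ h₁

theorem apply_mem_range_scalar_of_mem_centerIn {f : C(Cylinder, Matrix (Fin 2) (Fin 2) ℂ)}
    (hf : f ∈ centerIn WallpaperAlg) (p : Cylinder) :
    f p ∈ Set.range (Matrix.scalar (Fin 2)) := by
  refine Matrix.mem_range_scalar_of_commute_single fun i j _ ↦ ?_
  let bump : C(Cylinder, Matrix (Fin 2) (Fin 2) ℂ) :=
    ⟨fun p ↦ ((p.2 : ℂ) * (1 - p.2)) • Matrix.single i j 1, by fun_prop⟩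
  have h_bump : bump ∈ WallpaperAlg := by
    rintro z t (rfl | rfl) <;> exact ⟨0, 0, by simp [bump, Matrix.eta_fin_two 0]⟩
  exact (commute_apply_of_mem_centerIn hf h_bump dense_setOf_mul_one_sub_ne_zero
    (fun _ ↦ rfl) p).symm

/-- The character of `WallpaperAlg` at a boundary point `(z, t)` attached to a square root `w` of
`z`: the eigenvalue of `f (z, t)` on the eigenvector `(w, 1)` of `fiberUnitary z`. -/
noncomputable def boundaryCharacter {z : UnitCircle} {t : unitInterval} (ht : t = 0 ∨ t = 1) {w : ℂ}
    (hw : w ^ 2 = z) : WeakDual.characterSpace ℂ wallpaperStarSubalgebra.toSubalgebra where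
  val := StrongDual.toWeakDual
    { toFun f := f.1 (z, t) 1 0 * w + f.1 (z, t) 1 1
      map_add' f g := by
        simp only [AddMemClass.coe_add, ContinuousMap.add_apply, Matrix.add_apply]
        ring
      map_smul' c f := by
        simp only [SetLike.val_smul, ContinuousMap.coe_smul, Pi.smul_apply, Matrix.smul_apply,
          smul_eq_mul, RingHom.id_apply]
        ring
      cont := by fun_prop }
  property := by
    rw [WeakDual.CharacterSpace.eq_set_map_one_map_mul]
    refine ⟨by simp, fun f g ↦ ?_⟩
    obtain ⟨a, b, hf⟩ := f.2 z t ht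
    obtain ⟨c, d, hg⟩ := g.2 z t ht
    have h_mul : (b * c + a * d) * w + (b * (z * d) + a * c) = (b * w + a) * (d * w + c) := by
      linear_combination -b * d * hw
    simpa [hf, hg] using h_mul

theorem boundaryCharacter_apply {z : UnitCircle} {t : unitInterval} (ht : t = 0 ∨ t = 1) {w : ℂ}
    (hw : w ^ 2 = z) (f : wallpaperStarSubalgebra.toSubalgebra) :
    boundaryCharacter ht hw f = f.1 (z, t) 1 0 * w + f.1 (z, t) 1 1 := rfl

theorem boundaryCharacter_eq_of_mem_centerIn {z : UnitCircle} {t : unitInterval}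
    (ht : t = 0 ∨ t = 1) {w v : ℂ} (hw : w ^ 2 = z) (hv : v ^ 2 = z)
    {f : wallpaperStarSubalgebra.toSubalgebra} (hf : f.1 ∈ centerIn WallpaperAlg) :
    boundaryCharacter ht hw f = boundaryCharacter ht hv f := by
  obtain ⟨c, hc⟩ := apply_mem_range_scalar_of_mem_centerIn hf (z, t)
  simp [boundaryCharacter_apply, ← hc]

theorem boundaryCharacter_injective {z : UnitCircle} {t : unitInterval} (ht : t = 0 ∨ t = 1)
    {w v : ℂ} (hw : w ^ 2 = z) (hv : v ^ 2 = z)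
    (h_eq : boundaryCharacter ht hw = boundaryCharacter ht hv) : w = v := by
  let U : wallpaperStarSubalgebra.toSubalgebra :=
    ⟨⟨fun p ↦ fiberUnitary p.1, by unfold fiberUnitary; fun_prop⟩,
      mem_wallpaperAlg_iff.2 fun _ _ _ ↦ fiberUnitary_mem_centralizer⟩
  simpa [boundaryCharacter_apply, U, fiberUnitary] using DFunLike.congr_fun h_eq U

/-- **The wallpaper-group C*-algebra is not weakly central.**
The set `A = {f ∈ C(𝕋 × [0,1], M₂(ℂ)) : f(z,t) = [[a, z·b],[b, a]] for t ∈ {0,1}}` is a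
unital C*-subalgebra of `C(𝕋 × [0,1], M₂(ℂ))`, and it is not weakly central. -/
theorem wallpaperAlg_not_weaklyCentral :
    (∃ S : StarSubalgebra ℂ C(Cylinder, Matrix (Fin 2) (Fin 2) ℂ),
        (S : Set C(Cylinder, Matrix (Fin 2) (Fin 2) ℂ)) = WallpaperAlg ∧
        IsClosed WallpaperAlg) ∧
    ¬ WeaklyCentralIn WallpaperAlg := by
  refine ⟨⟨wallpaperStarSubalgebra, rfl, isClosed_wallpaperAlg⟩, ?_⟩
  let z : UnitCircle := ⟨1, norm_one⟩
  have h_pos : (1 : ℂ) ^ 2 = z := one_pow 2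
  have h_neg : (-1 : ℂ) ^ 2 = z := neg_one_sq
  have h_bdry : (0 : unitInterval) = 0 ∨ (0 : unitInterval) = 1 := Or.inl rfl
  refine not_weaklyCentralIn_of_characterSpace (S := wallpaperStarSubalgebra.toSubalgebra)
    isClosed_wallpaperAlg (χ := boundaryCharacter h_bdry h_pos)
    (ψ := boundaryCharacter h_bdry h_neg) (fun h_eq ↦ ?_) fun f hf ↦ ?_
  · have h_sign : (1 : ℂ) = -1 := boundaryCharacter_injective h_bdry h_pos h_neg h_eq
    norm_num at h_sign
  · exact boundaryCharacter_eq_of_mem_centerIn h_bdry h_pos h_neg hf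
end

section
/- Let 𝕋 ⊆ ℂ be the unit circle and let A = {f ∈ C(𝕋 × [0,1], M₂(ℂ)) : for every z ∈ 𝕋 and t ∈ {0,1} there exist a, b ∈ ℂ with f(z,t) = [[a, z·b],[b, a]]}. Then the center of A consists exactly of the scalar-valued elements: Z(A) = {f ∈ A : for every (z,t) ∈ 𝕋 × [0,1], f(z,t) is a scalar multiple of the 2×2 identity matrix}. -/
/-!
Away from the two boundary circles `t = 0` and `t = 1` the defining condition of the algebra is
void, so there its elements take every matrix as a value, and a central element takes values in the
center of `M₂(ℂ)`, which consists of the scalar matrices. The two circles have dense complement, and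
the center of a Hausdorff semigroup with continuous multiplication is closed, so by continuity the
same holds at every point of the cylinder.
-/

section CenterOfFunctionAlgebra

variable {X R : Type*} [TopologicalSpace X] [TopologicalSpace R]

lemma exists_eqOn_zero_apply_eq [CompletelyRegularSpace X] [Zero R] [MulActionWithZero ℝ R]
    [ContinuousSMul ℝ R] {F : Set X} (hF : IsClosed F) {x : X} (hx : x ∉ F) (r : R) :
    ∃ g : C(X, R), Set.EqOn g 0 F ∧ g x = r := by
  obtain ⟨φ, hφ, hφx, hφF⟩ := CompletelyRegularSpace.completely_regular x F hF hx
  refine ⟨⟨fun y => (1 - (φ y : ℝ)) • r, by fun_prop⟩, fun y hy => ?_, ?_⟩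
  · simp [hφF hy]
  · simp [hφx]

lemma apply_mem_center_of_mem_centerIn [Semigroup R] [ContinuousMul R] [T2Space R]
    {𝒜 : Set C(X, R)} {D : Set X} (hD : Dense D) (h𝒜 : ∀ x ∈ D, ∀ r : R, ∃ g ∈ 𝒜, g x = r)
    {f : C(X, R)} (hf : f ∈ centerIn 𝒜) (x : X) : f x ∈ Set.center R := by
  refine Semigroup.mem_center_iff.mpr fun r => ?_
  suffices h : (fun y => r * f y) = fun y => f y * r from congrFun h x
  refine Continuous.ext_on hD (by fun_prop) (by fun_prop) fun y hy => ?_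
  obtain ⟨g, hg, rfl⟩ := h𝒜 y hy r
  exact (DFunLike.congr_fun (hf.2 g hg) y).symm

lemma mem_centerIn_of_forall_apply_mem_center [Mul R] [ContinuousMul R] {𝒜 : Set C(X, R)}
    {f : C(X, R)} (hf : f ∈ 𝒜) (hc : ∀ x, f x ∈ Set.center R) : f ∈ centerIn 𝒜 :=
  ⟨hf, fun g _ => ContinuousMap.ext fun x => (hc x).comm (g x)⟩

theorem centerIn_eq_of_forall_eqOn_zero_mem [CompletelyRegularSpace X] [SemigroupWithZero R]
    [ContinuousMul R] [T2Space R] [MulActionWithZero ℝ R] [ContinuousSMul ℝ R]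
    {𝒜 : Set C(X, R)} {F : Set X} (hF : IsClosed F) (hFc : Dense Fᶜ)
    (h𝒜 : ∀ g : C(X, R), Set.EqOn g 0 F → g ∈ 𝒜) :
    centerIn 𝒜 = {f ∈ 𝒜 | ∀ x, f x ∈ Set.center R} := by
  have surj : ∀ x ∈ Fᶜ, ∀ r : R, ∃ g ∈ 𝒜, g x = r := by
    intro x hx r
    obtain ⟨g, hgF, hgx⟩ := exists_eqOn_zero_apply_eq hF hx r
    exact ⟨g, h𝒜 g hgF, hgx⟩
  ext f
  exact ⟨fun hf => ⟨hf.1, apply_mem_center_of_mem_centerIn hFc surj hf⟩,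
    fun hf => mem_centerIn_of_forall_apply_mem_center hf.1 hf.2⟩

end CenterOfFunctionAlgebra

lemma mem_center_matrix_iff_exists_smul_one {n K : Type*} [Fintype n] [DecidableEq n]
    [CommSemiring K] {M : Matrix n n K} :
    M ∈ Set.center (Matrix n n K) ↔ ∃ c : K, M = c • (1 : Matrix n n K) := by
  simp only [Matrix.center_eq_range, Set.mem_range, Matrix.scalar_apply,
    Matrix.smul_one_eq_diagonal, eq_comm]

/-- The two boundary circles `𝕋 × {0, 1}` of the cylinder, on which the defining condition of
`WallpaperAlg` is imposed. -/
def boundaryCircles : Set Cylinder := Prod.snd ⁻¹' {0, 1}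

lemma isClosed_boundaryCircles : IsClosed boundaryCircles :=
  (Set.toFinite {0, 1}).isClosed.preimage continuous_snd

lemma dense_compl_boundaryCircles : Dense boundaryCirclesᶜ := by
  have h : Dense ({0, 1}ᶜ : Set unitInterval) := by
    simpa only [Set.compl_eq_univ_sdiff] using dense_univ.sdiff_finite (Set.toFinite {0, 1})
  exact h.preimage isOpenMap_snd

lemma mem_wallpaperAlg_of_eqOn_zero {g : C(Cylinder, Matrix (Fin 2) (Fin 2) ℂ)}
    (hg : Set.EqOn g 0 boundaryCircles) : g ∈ WallpaperAlg := by
  intro z t ht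
  refine ⟨0, 0, ?_⟩
  rw [mul_zero, hg (show (z, t) ∈ boundaryCircles from ht)]
  exact Matrix.eta_fin_two 0

/-- **The center of the wallpaper-group C*-algebra consists of the scalar-valued elements.**
For the algebra `A ⊆ C(𝕋 × [0,1], M₂(ℂ))` of the wallpaper group, the center of `A`
is exactly the set of elements of `A` all of whose values are scalar multiples of the
`2×2` identity matrix. -/
theorem center_wallpaperAlg :
    centerIn WallpaperAlg =
      {f ∈ WallpaperAlg | ∀ q : Cylinder,
        ∃ c : ℂ, f q = c • (1 : Matrix (Fin 2) (Fin 2) ℂ)} := by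
  have center_eq := centerIn_eq_of_forall_eqOn_zero_mem isClosed_boundaryCircles
    dense_compl_boundaryCircles fun _ => mem_wallpaperAlg_of_eqOn_zero
  simpa only [mem_center_matrix_iff_exists_smul_one] using center_eq
end

section
/- Let B be a finite-dimensional C*-algebra over ℂ and let J be a two-sided ideal of B. Then B has the center quotient property with respect to J: for every x ∈ B such that x*b − b*x ∈ J for all b ∈ B, there exists z in the center Z(B) of B with x − z ∈ J. -/
/-!
In a C*-ring a nilpotent self-adjoint element vanishes, and `star a * a` is self-adjoint, so a
nilpotent left ideal is zero; hence an Artinian C*-ring has zero Jacobson radical and is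
semisimple. The two-sided ideals of a semisimple ring correspond to the sets of its isotypic
components, so `J` has a two-sided complement `K`. Writing `x = y + z` with `y ∈ J` and `z ∈ K`,
each commutator of `z` lies in `K`, and in `J` because those of `x` and `y` do; hence it is zero.
-/

section CStarRing

variable {A : Type*} [NormedRing A] [StarRing A] [CStarRing A]

theorem eq_zero_of_isSelfAdjoint_of_isNilpotent {a : A} (ha : IsSelfAdjoint a)
    (hnil : IsNilpotent a) : a = 0 := by
  obtain ⟨n, hn⟩ := hnil
  have hpow : a ^ 2 ^ n = 0 := pow_eq_zero_of_le Nat.lt_two_pow_self.le hn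
  have hnorm : ‖a‖ ^ 2 ^ n = 0 := by rw [← ha.norm_pow_two_pow, hpow, norm_zero]
  exact norm_eq_zero.mp (eq_zero_of_pow_eq_zero hnorm)

theorem ideal_eq_bot_of_isNilpotent {I : Ideal A} (hI : IsNilpotent I) : I = ⊥ := by
  obtain ⟨n, hn⟩ := hI
  refine (Submodule.eq_bot_iff I).mpr fun a ha ↦ ?_
  have hmem : star a * a ∈ I := I.mul_mem_left _ ha
  have hpow : (star a * a) ^ n = 0 := by simpa [hn] using Ideal.pow_mem_pow hmem n
  exact (CStarRing.star_mul_self_eq_zero_iff a).mp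
    (eq_zero_of_isSelfAdjoint_of_isNilpotent (.star_mul_self a) ⟨n, hpow⟩)

theorem isSemisimpleRing_of_cStarRing [IsArtinianRing A] : IsSemisimpleRing A :=
  IsArtinianRing.isSemisimpleRing_iff_jacobson.mpr
    (ideal_eq_bot_of_isNilpotent IsSemiprimaryRing.isNilpotent)

end CStarRing

theorem complementedLattice_twoSidedIdeal {R : Type*} [Ring R] [IsSemisimpleRing R] :
    ComplementedLattice (TwoSidedIdeal R) :=
  let fullyInvariantIso : fullyInvariantSubmodule R R ≃o {I : Ideal R // I.IsTwoSided} :=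
    OrderIso.setCongr _ {I : Ideal R | I.IsTwoSided} <|
      Set.ext fun _ ↦ isFullyInvariant_iff_isTwoSided
  (OrderIso.setIsotypicComponents.trans <|
    fullyInvariantIso.trans TwoSidedIdeal.orderIsoIsTwoSided.symm).complementedLattice

theorem exists_commute_sub_mem_of_isCompl {R : Type*} [NonUnitalNonAssocRing R]
    {J K : TwoSidedIdeal R} (hJK : IsCompl J K) {x : R} (hx : ∀ b : R, x * b - b * x ∈ J) :
    ∃ z : R, (∀ b : R, z * b = b * z) ∧ x - z ∈ J := by
  have hx_mem : x ∈ J ⊔ K := hJK.sup_eq_top ▸ TwoSidedIdeal.mem_top R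
  obtain ⟨y, hy, z, hz, rfl⟩ := TwoSidedIdeal.mem_sup.mp hx_mem
  refine ⟨z, fun b ↦ ?_, by rwa [add_sub_cancel_right]⟩
  have hy_comm : y * b - b * y ∈ J := sub_mem (J.mul_mem_right _ _ hy) (J.mul_mem_left _ _ hy)
  have hz_comm : z * b - b * z ∈ K := sub_mem (K.mul_mem_right _ _ hz) (K.mul_mem_left _ _ hz)
  have hz_comm' : z * b - b * z ∈ J := by
    have hsub : z * b - b * z = ((y + z) * b - b * (y + z)) - (y * b - b * y) := by
      rw [add_mul, mul_add]; abel
    exact hsub ▸ sub_mem (hx b) hy_comm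
  have hz_bot : z * b - b * z ∈ J ⊓ K := (TwoSidedIdeal.mem_inf R).mpr ⟨hz_comm', hz_comm⟩
  rw [hJK.inf_eq_bot, TwoSidedIdeal.mem_bot] at hz_bot
  exact sub_eq_zero.mp hz_bot

theorem finiteDimensional_center_quotient_property_general {R : Type*} [Ring R]
    [IsSemisimpleRing R] (J : TwoSidedIdeal R) (x : R) (hx : ∀ b : R, x * b - b * x ∈ J) :
    ∃ z : R, (∀ b : R, z * b = b * z) ∧ x - z ∈ J := by
  have := complementedLattice_twoSidedIdeal (R := R)
  obtain ⟨K, hJK⟩ := exists_isCompl J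
  exact exists_commute_sub_mem_of_isCompl hJK hx

/-- **Finite-dimensional C*-algebras have the center quotient property.**
If `B` is a finite-dimensional C*-algebra and `J` a two-sided ideal of `B`, then every
`x ∈ B` which is central modulo `J` is congruent modulo `J` to an element of the center
`Z(B)`. -/
theorem finiteDimensional_center_quotient_property
    {B : Type*} [NormedRing B] [StarRing B] [CStarRing B]
    [NormedAlgebra ℂ B] [StarModule ℂ B] [FiniteDimensional ℂ B]
    (J : TwoSidedIdeal B)
    (x : B) (hx : ∀ b : B, x * b - b * x ∈ J) :
    ∃ z : B, (∀ b : B, z * b = b * z) ∧ x - z ∈ J := by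
  have : IsArtinianRing B := IsArtinianRing.of_finite ℂ B
  have : IsSemisimpleRing B := isSemisimpleRing_of_cStarRing
  exact finiteDimensional_center_quotient_property_general J x hx
end
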